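/- arXiv:2106.14353 — 4 statements merged into one kernel-verified Lean document; each statement's English description precedes it below -/
import Mathlib

section
/- Let d = 1, δ ∈ (1,2), λ > 0 with δλ ∈ (0,2). Then for every z > 0 the one-dimensional isotropic spectral density of the Dagum function satisfies (1/π) ∫₀^∞ cos(z t) D_{λ,δ}(t) dt = −(1/π) · Im ∫₀^∞ [ 1 − e^{iπδλ/2} r^{δλ} / (1 + e^{iπδ/2} r^{δ})^{λ} ] e^{−z r} dr, where both integrals converge (the left-hand integrand is absolutely integrable since δ > 1). -/
open MeasureTheory Set

/-- The Dagum function with parameters `lam > 0`, `δ > 0`: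
`D_{λ,δ}(r) = 1 - (r^δ/(1+r^δ))^λ`. -/
noncomputable def dagum (lam δ r : ℝ) : ℝ := 1 - (r ^ δ / (1 + r ^ δ)) ^ lam

/-- The Dagum integrand rotated to the positive imaginary axis:
`1 - e^{iπδλ/2} r^{δλ} / (1 + e^{iπδ/2} r^δ)^λ`, principal branch powers. -/
noncomputable def dagumRot (lam δ : ℝ) (r : ℝ) : ℂ :=
  1 - Complex.exp (Complex.I * Real.pi * (δ * lam) / 2) * (r : ℂ) ^ ((δ * lam : ℝ) : ℂ) /
      (1 + Complex.exp (Complex.I * Real.pi * δ / 2) * (r : ℂ) ^ ((δ : ℝ) : ℂ)) ^ ((lam : ℝ) : ℂ)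

/-!
The Dagum function is the restriction to the positive reals of `D(w) = 1 - (1 + w^(-δ))^(-λ)`. As
`δ < 2`, the argument of `w^(-δ)` stays away from `±π` on the closed first quadrant, so there `D` is
holomorphic and `1 + w^(-δ)` is bounded away from `0`; hence `D` is bounded and is `O(|w|^(-δ))` at
infinity. Since `|exp(izw)| ≤ 1` on the quadrant and `δ > 1`, Cauchy's theorem rotates the ray of
integration of `D(w) exp(izw)` from the positive real to the positive imaginary axis. The decay of
the integrand at `0` and at infinity that this needs becomes decay at the two ends of a horizontal
strip after the substitution `w = exp u`. The factor `i` from `dw = i dr` turns the real part into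
minus the imaginary part.
-/

section Contour

open Complex Filter Topology

variable {E : Type*} [NormedAddCommGroup E] {α β : ℝ}

lemma integral_exp_smul_comp_exp [NormedSpace ℝ E] (f : ℝ → E) :
    ∫ x : ℝ, Real.exp x • f (Real.exp x) = ∫ r in Ioi (0 : ℝ), f r := by
  rw [← Real.range_exp, ← image_univ, integral_image_eq_integral_deriv_smul_of_monotoneOn .univ
    (fun x _ ↦ (Real.hasDerivAt_exp x).hasDerivWithinAt) (Real.exp_monotone.monotoneOn _),
    setIntegral_univ]

lemma integrable_exp_smul_comp_exp_iff [NormedSpace ℝ E] (f : ℝ → E) :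
    Integrable (fun x : ℝ ↦ Real.exp x • f (Real.exp x)) ↔ IntegrableOn f (Ioi 0) := by
  rw [← Real.range_exp, ← image_univ, integrableOn_image_iff_integrableOn_deriv_smul_of_monotoneOn
    .univ (fun x _ ↦ (Real.hasDerivAt_exp x).hasDerivWithinAt) (Real.exp_monotone.monotoneOn _),
    integrableOn_univ]

lemma tendsto_integral_vertical_cocompact [NormedSpace ℝ E] {f : ℂ → E} {g : ℝ → ℝ}
    (hαβ : α ≤ β) (hg : Tendsto g (cocompact ℝ) (𝓝 0))
    (hfg : ∀ w ∈ univ ×ℂ Icc α β, ‖f w‖ ≤ g w.re) :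
    Tendsto (fun T : ℝ ↦ ∫ y in α..β, f (T + y * I)) (cocompact ℝ) (𝓝 0) := by
  refine squeeze_zero_norm (a := fun T ↦ g T * |β - α|) (fun T ↦ ?_) (by simpa using hg.mul_const _)
  refine intervalIntegral.norm_integral_le_of_norm_le_const fun y hy ↦ ?_
  rw [uIoc_of_le hαβ] at hy
  simpa using hfg (T + y * I) (by simpa [mem_reProdIm] using Ioc_subset_Icc_self hy)

lemma integrable_horizontal {f : ℂ → E} {g : ℝ → ℝ} {y : ℝ}
    (hf : ContinuousOn f (univ ×ℂ {y})) (hg : Integrable g)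
    (hfg : ∀ w ∈ univ ×ℂ {y}, ‖f w‖ ≤ g w.re) :
    Integrable fun x : ℝ ↦ f (x + y * I) := by
  have hmem (x : ℝ) : (x + y * I : ℂ) ∈ univ ×ℂ {y} := by simp [mem_reProdIm]
  have hcont : Continuous fun x : ℝ ↦ f (x + y * I) := hf.comp_continuous (by fun_prop) hmem
  refine hg.mono' hcont.aestronglyMeasurable (ae_of_all _ fun x ↦ ?_)
  simpa using hfg _ (hmem x)

theorem integral_horizontal_eq [NormedSpace ℂ E] [CompleteSpace E] {f : ℂ → E} {g : ℝ → ℝ}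
    (hαβ : α ≤ β) (hf : DifferentiableOn ℂ f (univ ×ℂ Icc α β)) (hg : Integrable g)
    (hg₀ : Tendsto g (cocompact ℝ) (𝓝 0)) (hfg : ∀ w ∈ univ ×ℂ Icc α β, ‖f w‖ ≤ g w.re) :
    ∫ x : ℝ, f (x + α * I) = ∫ x : ℝ, f (x + β * I) := by
  have hline {y : ℝ} (hy : y ∈ Icc α β) :
      Tendsto (fun T : ℝ ↦ ∫ x in -T..T, f (x + y * I)) atTop (𝓝 (∫ x : ℝ, f (x + y * I))) := by
    have hsub : (univ ×ℂ {y} : Set ℂ) ⊆ univ ×ℂ Icc α β :=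
      reProdIm_subset_iff.2 (prod_mono subset_rfl (singleton_subset_iff.2 hy))
    exact intervalIntegral_tendsto_integral
      (integrable_horizontal (hf.continuousOn.mono hsub) hg fun w hw ↦ hfg w (hsub hw))
      tendsto_neg_atTop_atBot tendsto_id
  have hside := tendsto_integral_vertical_cocompact hαβ hg₀ hfg
  have hright := hside.mono_left atTop_le_cocompact
  have hleft := (hside.mono_left atBot_le_cocompact).comp tendsto_neg_atTop_atBot
  have hrect (T : ℝ) :
      (∫ x in -T..T, f (x + α * I)) - (∫ x in -T..T, f (x + β * I)) +
        I • (∫ y in α..β, f (T + y * I)) - I • (∫ y in α..β, f ((-T : ℝ) + y * I)) = 0 := by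
    refine integral_boundary_rect_eq_zero_of_differentiableOn f ⟨-T, α⟩ ⟨T, β⟩ (hf.mono ?_)
    rw [uIcc_of_le hαβ]
    exact reProdIm_subset_iff.2 (prod_mono (subset_univ _) subset_rfl)
  have hlim := (((hline (left_mem_Icc.2 hαβ)).sub (hline (right_mem_Icc.2 hαβ))).add
    (hright.const_smul I)).sub (hleft.const_smul I)
  simpa [sub_eq_zero] using tendsto_nhds_unique (hlim.congr hrect) tendsto_const_nhds

/-- The closed sector `α ≤ arg w ≤ β` without its vertex `0`. Arguments are principal, so `α` and
`β` are meant to lie in `(-π, π]`. -/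
def sector (α β : ℝ) : Set ℂ := {w | w ≠ 0 ∧ arg w ∈ Icc α β}

lemma ofReal_mul_exp_mem_sector (hα : -Real.pi < α) (hβ : β ≤ Real.pi) {r θ : ℝ} (hr : 0 < r)
    (hθ : θ ∈ Icc α β) : r * exp (θ * I) ∈ sector α β := by
  refine ⟨mul_ne_zero (ofReal_ne_zero.2 hr.ne') (exp_ne_zero _), ?_⟩
  rwa [exp_mul_I, arg_mul_cos_add_sin_mul_I hr ⟨hα.trans_le hθ.1, hθ.2.trans hβ⟩]

lemma integrableOn_ray (hα : -Real.pi < α) (hβ : β ≤ Real.pi) {F : ℂ → E} {g : ℝ → ℝ}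
    (hF : ContinuousOn F (sector α β)) (hg : IntegrableOn g (Ioi 0))
    (hFg : ∀ w ∈ sector α β, ‖F w‖ ≤ g ‖w‖) {θ : ℝ} (hθ : θ ∈ Icc α β) :
    IntegrableOn (fun r : ℝ ↦ F (r * exp (θ * I))) (Ioi 0) := by
  have hmem (r : ℝ) (hr : r ∈ Ioi (0 : ℝ)) : (r * exp (θ * I) : ℂ) ∈ sector α β :=
    ofReal_mul_exp_mem_sector hα hβ hr hθ
  have hcont : ContinuousOn (fun r : ℝ ↦ F (r * exp (θ * I))) (Ioi 0) :=
    hF.comp (by fun_prop) hmem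
  refine hg.mono' (hcont.aestronglyMeasurable measurableSet_Ioi) ?_
  filter_upwards [ae_restrict_mem measurableSet_Ioi] with r hr
  simpa [norm_exp_ofReal_mul_I, abs_of_pos (mem_Ioi.1 hr)] using hFg _ (hmem r hr)

theorem integral_ray_eq [NormedSpace ℂ E] [CompleteSpace E] (hα : -Real.pi < α) (hαβ : α ≤ β)
    (hβ : β ≤ Real.pi) {F : ℂ → E} {g : ℝ → ℝ} (hF : DifferentiableOn ℂ F (sector α β))
    (hg : IntegrableOn g (Ioi 0)) (hg₀ : Tendsto (fun r ↦ r * g r) (𝓝[>] 0) (𝓝 0))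
    (hg_top : Tendsto (fun r ↦ r * g r) atTop (𝓝 0)) (hFg : ∀ w ∈ sector α β, ‖F w‖ ≤ g ‖w‖) :
    exp (α * I) • ∫ r in Ioi (0 : ℝ), F (r * exp (α * I)) =
      exp (β * I) • ∫ r in Ioi (0 : ℝ), F (r * exp (β * I)) := by
  have hexp (x y : ℝ) : exp (x + y * I) = (Real.exp x : ℝ) * exp (y * I) := by
    rw [Complex.exp_add, ofReal_exp]
  have hray (θ : ℝ) : exp (θ * I) • ∫ r in Ioi (0 : ℝ), F (r * exp (θ * I)) =
      ∫ x : ℝ, exp (x + θ * I) • F (exp (x + θ * I)) := by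
    rw [← integral_exp_smul_comp_exp, ← integral_smul]
    simp_rw [hexp, mul_smul, coe_smul, smul_comm (exp (θ * I))]
  have hstrip : MapsTo exp (univ ×ℂ Icc α β) (sector α β) := fun u hu ↦ by
    rw [← re_add_im u, hexp]
    exact ofReal_mul_exp_mem_sector hα hβ (Real.exp_pos _) hu.2
  have hG : Tendsto (fun x ↦ Real.exp x * g (Real.exp x)) (cocompact ℝ) (𝓝 0) := by
    rw [cocompact_eq_atBot_atTop, tendsto_sup]
    exact ⟨hg₀.comp Real.tendsto_exp_atBot_nhdsGT, hg_top.comp Real.tendsto_exp_atTop⟩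
  rw [hray, hray]
  refine integral_horizontal_eq hαβ (f := fun u ↦ exp u • F (exp u))
    (differentiable_exp.differentiableOn.smul (hF.comp differentiable_exp.differentiableOn hstrip))
    ((integrable_exp_smul_comp_exp_iff g).2 hg) hG fun u hu ↦ ?_
  rw [norm_smul, ← norm_exp u]
  exact mul_le_mul_of_nonneg_left (hFg _ (hstrip hu)) (norm_nonneg _)

end Contour

section Power

open Complex Filter Topology

lemma mul_cpow_of_arg_add_mem {x y : ℂ} (hx : x ≠ 0) (hy : y ≠ 0)
    (hxy : arg x + arg y ∈ Ioc (-Real.pi) Real.pi) (c : ℂ) : (x * y) ^ c = x ^ c * y ^ c := by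
  rw [cpow_def_of_ne_zero (mul_ne_zero hx hy), cpow_def_of_ne_zero hx, cpow_def_of_ne_zero hy,
    log_mul hx hy hxy, add_mul, Complex.exp_add]

lemma ofReal_mul_I_cpow {r : ℝ} (hr : 0 < r) (c : ℂ) :
    (r * I : ℂ) ^ c = exp (Real.pi / 2 * I * c) * (r : ℂ) ^ c := by
  rw [cpow_def_of_ne_zero (mul_ne_zero (ofReal_ne_zero.2 hr.ne') I_ne_zero),
    cpow_def_of_ne_zero (ofReal_ne_zero.2 hr.ne'), log_ofReal_mul hr I_ne_zero, log_I,
    ofReal_log hr.le, ← Complex.exp_add]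
  ring_nf

lemma arg_cpow_ofReal {w : ℂ} (hw : w ≠ 0) {a : ℝ} (h : arg w * a ∈ Ioc (-Real.pi) Real.pi) :
    arg (w ^ (a : ℂ)) = arg w * a := by
  rw [cpow_ofReal, ofReal_cos, ofReal_sin,
    arg_mul_cos_add_sin_mul_I (Real.rpow_pos_of_pos (norm_pos_iff.2 hw) a) h]

lemma cpow_ofReal_mem_slitPlane {w : ℂ} (hw : w ≠ 0) {a : ℝ} (h : |arg w * a| < Real.pi) :
    w ^ (a : ℂ) ∈ slitPlane := by
  obtain ⟨hlower, hupper⟩ := abs_lt.1 h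
  rw [mem_slitPlane_iff_arg, arg_cpow_ofReal hw ⟨hlower, hupper.le⟩]
  exact ⟨hupper.ne, by simp [cpow_eq_zero_iff, hw]⟩

lemma one_add_mem_slitPlane {v : ℂ} (hv : v ∈ slitPlane) : 1 + v ∈ slitPlane := by
  rw [mem_slitPlane_iff] at hv ⊢
  exact hv.imp (fun h ↦ by simpa using add_pos one_pos h) fun h ↦ by simpa using h

lemma inv_mem_slitPlane {v : ℂ} (hv : v ∈ slitPlane) : v⁻¹ ∈ slitPlane := by
  simpa [mem_slitPlane_iff_arg, arg_inv, slitPlane_arg_ne_pi hv, slitPlane_ne_zero hv,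
    neg_eq_iff_eq_neg] using (neg_pi_lt_arg v).ne'

lemma arg_add_arg_one_add_inv_mem_Ioc {v : ℂ} (hv : v ∈ slitPlane) :
    arg v + arg (1 + v⁻¹) ∈ Ioc (-Real.pi) Real.pi := by
  have him : (1 + v⁻¹).im = -v.im / normSq v := by simp
  have hsq : 0 < normSq v := normSq_pos.2 (slitPlane_ne_zero hv)
  rcases lt_trichotomy v.im 0 with hneg | hzero | hpos
  · have hv_arg : arg v < 0 := arg_neg_iff.2 hneg
    have hinv_arg : 0 ≤ arg (1 + v⁻¹) :=
      arg_nonneg_iff.2 (him ▸ (div_pos (neg_pos.2 hneg) hsq).le)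
    constructor <;> linarith [neg_pi_lt_arg v, arg_le_pi (1 + v⁻¹)]
  · have hre : 0 < v.re := (mem_slitPlane_iff.1 hv).resolve_right (not_not.2 hzero)
    rw [arg_eq_zero_iff.2 ⟨hre.le, hzero⟩, zero_add]
    exact arg_mem_Ioc _
  · have hv_arg : 0 ≤ arg v := arg_nonneg_iff.2 hpos.le
    have hinv_arg : arg (1 + v⁻¹) < 0 :=
      arg_neg_iff.2 (him ▸ div_neg_of_neg_of_pos (neg_lt_zero.2 hpos) hsq)
    constructor <;> linarith [arg_le_pi v, neg_pi_lt_arg (1 + v⁻¹)]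

lemma one_add_cpow_eq_cpow_mul {v : ℂ} (hv : v ∈ slitPlane) (c : ℂ) :
    (1 + v) ^ c = v ^ c * (1 + v⁻¹) ^ c := by
  have hv₀ := slitPlane_ne_zero hv
  rw [← mul_cpow_of_arg_add_mem hv₀
    (slitPlane_ne_zero (one_add_mem_slitPlane (inv_mem_slitPlane hv)))
    (arg_add_arg_one_add_inv_mem_Ioc hv), mul_add, mul_one, mul_inv_cancel₀ hv₀, add_comm]

lemma sin_le_norm_one_add {v : ℂ} {φ : ℝ} (hφ : φ ≤ Real.pi) (hv : |arg v| ≤ φ) :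
    Real.sin φ ≤ ‖1 + v‖ := by
  have hcos : ‖v‖ * Real.cos φ ≤ v.re := by
    rw [← norm_mul_cos_arg, ← Real.cos_abs (arg v)]
    gcongr
    exact Real.cos_le_cos_of_nonneg_of_le_pi (abs_nonneg _) hφ hv
  have hexpand : ‖1 + v‖ ^ 2 = 1 + 2 * v.re + ‖v‖ ^ 2 := by
    rw [Complex.sq_norm, Complex.sq_norm, normSq_apply, normSq_apply, add_re, add_im, one_re,
      one_im]
    ring
  refine le_of_sq_le_sq ?_ (norm_nonneg _)
  calc Real.sin φ ^ 2 ≤ (‖v‖ + Real.cos φ) ^ 2 + Real.sin φ ^ 2 := by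
        linarith [sq_nonneg (‖v‖ + Real.cos φ)]
    _ = 1 + 2 * (‖v‖ * Real.cos φ) + ‖v‖ ^ 2 := by
        linear_combination Real.sin_sq_add_cos_sq φ
    _ ≤ ‖1 + v‖ ^ 2 := by rw [hexpand]; gcongr

lemma norm_one_sub_one_add_cpow_neg_le {c s : ℝ} (hc : 0 ≤ c) (hs : 0 < s) {v : ℂ}
    (hv : s ≤ ‖1 + v‖) : ‖1 - (1 + v) ^ ((-c : ℝ) : ℂ)‖ ≤ 1 + s ^ (-c) := by
  refine (norm_sub_le _ _).trans ?_
  rw [norm_one, norm_cpow_real]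
  gcongr 1 + ?_
  exact Real.rpow_le_rpow_of_nonpos hs hv (neg_nonpos.2 hc)

lemma one_sub_one_add_cpow_isBigO (c : ℂ) :
    (fun v : ℂ ↦ 1 - (1 + v) ^ c) =O[𝓝 0] fun v ↦ v := by
  have hd : DifferentiableAt ℂ (fun v : ℂ ↦ (1 + v) ^ c) 0 :=
    DifferentiableAt.cpow_const (by fun_prop) (by simp)
  simpa using hd.isBigO_sub.neg_left

lemma exists_norm_one_sub_one_add_cpow_neg_le_min {c s : ℝ} (hc : 0 ≤ c) (hs : 0 < s) :
    ∃ C, ∀ v : ℂ, s ≤ ‖1 + v‖ → ‖1 - (1 + v) ^ ((-c : ℝ) : ℂ)‖ ≤ C * min 1 ‖v‖ := by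
  obtain ⟨M, hM, hnear⟩ := (one_sub_one_add_cpow_isBigO ((-c : ℝ) : ℂ)).exists_pos
  obtain ⟨ε, hε, hnear⟩ := Metric.eventually_nhds_iff.1 hnear.bound
  set B := 1 + s ^ (-c) with hB
  have hB₀ : 0 ≤ B := by positivity
  refine ⟨B + M + B / ε, fun v hv ↦ ?_⟩
  have hbdd := norm_one_sub_one_add_cpow_neg_le hc hs hv
  rw [mul_min_of_nonneg _ _ (by positivity), mul_one, le_min_iff]
  refine ⟨hbdd.trans (by rw [← hB, add_assoc]; exact le_add_of_nonneg_right (by positivity)), ?_⟩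
  rcases lt_or_ge ‖v‖ ε with hsmall | hlarge
  · refine (hnear (by simpa using hsmall)).trans ?_
    gcongr
    linarith [div_nonneg hB₀ hε.le]
  · calc _ ≤ B / ε * ε := by rwa [div_mul_cancel₀ _ hε.ne']
      _ ≤ (B + M + B / ε) * ‖v‖ := by gcongr; linarith

lemma integrableOn_min_one_rpow {a : ℝ} (ha : a < -1) :
    IntegrableOn (fun r : ℝ ↦ min 1 (r ^ a)) (Ioi 0) := by
  have hmeas : Measurable fun r : ℝ ↦ min 1 (r ^ a) := by fun_prop
  have hnorm {r : ℝ} (hr : 0 < r) : ‖min 1 (r ^ a)‖ = min 1 (r ^ a) :=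
    Real.norm_of_nonneg (by positivity)
  rw [← Ioc_union_Ioi_eq_Ioi zero_le_one, integrableOn_union]
  constructor
  · refine Integrable.mono' (integrableOn_const (by simp)) hmeas.aestronglyMeasurable
      (g := fun _ ↦ (1 : ℝ)) ?_
    filter_upwards [ae_restrict_mem measurableSet_Ioc] with r hr
    exact (hnorm hr.1).trans_le (min_le_left _ _)
  · refine Integrable.mono' (integrableOn_Ioi_rpow_of_lt ha one_pos) hmeas.aestronglyMeasurable ?_
    filter_upwards [ae_restrict_mem measurableSet_Ioi] with r hr
    exact (hnorm (one_pos.trans hr)).trans_le (min_le_right _ _)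

lemma tendsto_mul_min_one_rpow_nhdsGT_zero (a : ℝ) :
    Tendsto (fun r : ℝ ↦ r * min 1 (r ^ a)) (𝓝[>] 0) (𝓝 0) := by
  refine squeeze_zero' ?_ ?_ (tendsto_id.mono_left nhdsWithin_le_nhds)
  all_goals filter_upwards [self_mem_nhdsWithin] with r hr
  · have : 0 < r := hr
    positivity
  · exact mul_le_of_le_one_right (mem_Ioi.1 hr).le (min_le_left _ _)

lemma tendsto_mul_min_one_rpow_atTop {a : ℝ} (ha : a < -1) :
    Tendsto (fun r : ℝ ↦ r * min 1 (r ^ a)) atTop (𝓝 0) := by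
  refine squeeze_zero' ?_ ?_ (tendsto_rpow_neg_atTop (y := -(1 + a)) (by linarith))
  all_goals filter_upwards [eventually_gt_atTop 0] with r hr
  · positivity
  · rw [neg_neg, Real.rpow_one_add' hr.le (by linarith)]
    gcongr
    exact min_le_right _ _

end Power

section Dagum

open Complex

variable {δ lam z : ℝ}

/-- The holomorphic extension of the Dagum function to the sector
`|arg w| < π / δ`, written with the negative exponent so that its decay at infinity is visible. -/
noncomputable def complexDagum (lam δ : ℝ) (w : ℂ) : ℂ :=
  1 - (1 + w ^ ((-δ : ℝ) : ℂ)) ^ ((-lam : ℝ) : ℂ)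

lemma complexDagum_eq (lam : ℝ) {w : ℂ} (hw : w ≠ 0) (harg : |arg w * δ| < Real.pi) :
    complexDagum lam δ w = 1 - w ^ ((δ * lam : ℝ) : ℂ) / (1 + w ^ (δ : ℂ)) ^ (lam : ℂ) := by
  have hslit := cpow_ofReal_mem_slitPlane hw harg
  have hpow : w ^ ((δ * lam : ℝ) : ℂ) = (w ^ (δ : ℂ)) ^ (lam : ℂ) := by
    have him : (log w * δ).im = arg w * δ := by rw [im_mul_ofReal, log_im]
    rw [ofReal_mul, cpow_mul] <;> rw [him]
    exacts [(abs_lt.1 harg).1, (abs_lt.1 harg).2.le]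
  rw [complexDagum, hpow, one_add_cpow_eq_cpow_mul hslit, ofReal_neg, ofReal_neg, cpow_neg,
    cpow_neg, div_mul_cancel_left₀]
  simp [cpow_eq_zero_iff, slitPlane_ne_zero hslit]

lemma complexDagum_ofReal (lam δ : ℝ) {r : ℝ} (hr : 0 < r) :
    complexDagum lam δ r = dagum lam δ r := by
  have hrδ : 0 ≤ r ^ δ := by positivity
  rw [complexDagum_eq lam (ofReal_ne_zero.2 hr.ne') (by simp [arg_ofReal_of_nonneg hr.le,
    Real.pi_pos]), dagum, Real.div_rpow hrδ (by positivity), ← Real.rpow_mul hr.le]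
  push_cast [ofReal_cpow hr.le, ofReal_cpow (add_nonneg zero_le_one hrδ)]
  rfl

lemma complexDagum_ofReal_mul_I (lam : ℝ) (hδ : |δ| < 2) {r : ℝ} (hr : 0 < r) :
    complexDagum lam δ (r * I) = dagumRot lam δ r := by
  have harg : |arg (r * I) * δ| < Real.pi := by
    rw [arg_real_mul I hr, arg_I, abs_mul, abs_of_pos Real.pi_div_two_pos]
    nlinarith [Real.pi_pos]
  rw [complexDagum_eq lam (mul_ne_zero (ofReal_ne_zero.2 hr.ne') I_ne_zero) harg,
    ofReal_mul_I_cpow hr, ofReal_mul_I_cpow hr, dagumRot]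
  push_cast
  ring_nf

lemma differentiableAt_complexDagum (lam : ℝ) {w : ℂ} (hw : w ∈ slitPlane)
    (harg : |arg w * δ| < Real.pi) : DifferentiableAt ℂ (complexDagum lam δ) w := by
  have hslit : w ^ ((-δ : ℝ) : ℂ) ∈ slitPlane :=
    cpow_ofReal_mem_slitPlane (slitPlane_ne_zero hw) (by rwa [mul_neg, abs_neg])
  exact (((differentiableAt_id.cpow_const hw).const_add 1).cpow_const
    (one_add_mem_slitPlane hslit)).const_sub 1

lemma exists_norm_complexDagum_le (hlam : 0 ≤ lam) {φ : ℝ} (hφ₀ : 0 < φ) (hφ : φ < Real.pi) :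
    ∃ C, ∀ w : ℂ, w ≠ 0 → |arg w * δ| ≤ φ →
      ‖complexDagum lam δ w‖ ≤ C * min 1 (‖w‖ ^ (-δ)) := by
  obtain ⟨C, hC⟩ := exists_norm_one_sub_one_add_cpow_neg_le_min hlam
    (Real.sin_pos_of_pos_of_lt_pi hφ₀ hφ)
  refine ⟨C, fun w hw harg ↦ ?_⟩
  have harg' : |arg w * -δ| ≤ φ := by rwa [mul_neg, abs_neg]
  obtain ⟨hlower, hupper⟩ := abs_lt.1 (harg'.trans_lt hφ)
  rw [← norm_cpow_real]
  exact hC _ (sin_le_norm_one_add hφ.le (by rwa [arg_cpow_ofReal hw ⟨hlower, hupper.le⟩]))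

/-- The integrand `D_{λ,δ}(w) e^{izw}` of the contour integral: its real part on the positive real
axis is the integrand of the cosine transform, and on the positive imaginary axis the oscillating
factor becomes `e^{-zr}`. -/
noncomputable def dagumKernel (lam δ z : ℝ) (w : ℂ) : ℂ :=
  complexDagum lam δ w * exp (I * z * w)

lemma re_dagumKernel_ofReal (lam δ z : ℝ) {r : ℝ} (hr : 0 < r) :
    (dagumKernel lam δ z r).re = Real.cos (z * r) * dagum lam δ r := by
  rw [dagumKernel, complexDagum_ofReal lam δ hr, re_ofReal_mul, mul_assoc, mul_comm I, ← ofReal_mul,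
    exp_ofReal_mul_I_re, mul_comm]

lemma dagumKernel_ofReal_mul_I (lam z : ℝ) (hδ : |δ| < 2) {r : ℝ} (hr : 0 < r) :
    dagumKernel lam δ z (r * I) = dagumRot lam δ r * exp (-(z * r)) := by
  rw [dagumKernel, complexDagum_ofReal_mul_I lam hδ hr]
  congr 2
  linear_combination (z * r : ℂ) * I_mul_I

lemma abs_arg_mul_le_of_mem_quadrant (hδ : 0 ≤ δ) {w : ℂ} (hw : w ∈ sector 0 (Real.pi / 2)) :
    |arg w * δ| ≤ Real.pi / 2 * δ := by
  rw [abs_of_nonneg (mul_nonneg hw.2.1 hδ)]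
  exact mul_le_mul_of_nonneg_right hw.2.2 hδ

lemma differentiableOn_dagumKernel (lam z : ℝ) (hδ₀ : 0 ≤ δ) (hδ₂ : δ < 2) :
    DifferentiableOn ℂ (dagumKernel lam δ z) (sector 0 (Real.pi / 2)) := by
  intro w hw
  have harg : |arg w * δ| < Real.pi :=
    (abs_arg_mul_le_of_mem_quadrant hδ₀ hw).trans_lt (by nlinarith [Real.pi_pos])
  have hslit : w ∈ slitPlane :=
    mem_slitPlane_iff_arg.2 ⟨(hw.2.2.trans_lt (half_lt_self Real.pi_pos)).ne, hw.1⟩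
  exact ((differentiableAt_complexDagum lam hslit harg).mul (by fun_prop)).differentiableWithinAt

lemma norm_dagumKernel_le (lam δ : ℝ) (hz : 0 ≤ z) {w : ℂ} (hw : 0 ≤ w.im) :
    ‖dagumKernel lam δ z w‖ ≤ ‖complexDagum lam δ w‖ := by
  rw [dagumKernel, norm_mul, norm_exp]
  refine mul_le_of_le_one_right (norm_nonneg _) (Real.exp_le_one_iff.2 ?_)
  simpa [mul_assoc] using mul_nonneg hz hw

lemma exists_norm_dagumKernel_le (hδ₀ : 0 < δ) (hδ₂ : δ < 2) (hlam : 0 ≤ lam) (hz : 0 ≤ z) :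
    ∃ C, ∀ w ∈ sector 0 (Real.pi / 2), ‖dagumKernel lam δ z w‖ ≤ C * min 1 (‖w‖ ^ (-δ)) := by
  obtain ⟨C, hC⟩ := exists_norm_complexDagum_le (δ := δ) (φ := Real.pi / 2 * δ) hlam (by positivity)
    (by nlinarith [Real.pi_pos])
  exact ⟨C, fun w hw ↦ (norm_dagumKernel_le lam δ hz (arg_nonneg_iff.1 hw.2.1)).trans
    (hC w hw.1 (abs_arg_mul_le_of_mem_quadrant hδ₀.le hw))⟩

lemma integrableOn_dagumKernel_ray (hδ₁ : 1 < δ) (hδ₂ : δ < 2) (hlam : 0 ≤ lam) (hz : 0 ≤ z)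
    {θ : ℝ} (hθ : θ ∈ Icc 0 (Real.pi / 2)) :
    IntegrableOn (fun r : ℝ ↦ dagumKernel lam δ z (r * exp (θ * I))) (Ioi 0) := by
  obtain ⟨C, hC⟩ := exists_norm_dagumKernel_le (by linarith) hδ₂ hlam hz
  exact integrableOn_ray (by linarith [Real.pi_pos]) (by linarith [Real.pi_pos])
    (differentiableOn_dagumKernel lam z (by linarith) hδ₂).continuousOn
    ((integrableOn_min_one_rpow (by linarith)).const_mul C) hC hθ

lemma integral_dagumKernel_ofReal (hδ₁ : 1 < δ) (hδ₂ : δ < 2) (hlam : 0 ≤ lam) (hz : 0 ≤ z) :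
    ∫ r in Ioi (0 : ℝ), dagumKernel lam δ z r =
      I * ∫ r in Ioi (0 : ℝ), dagumKernel lam δ z (r * I) := by
  obtain ⟨C, hC⟩ := exists_norm_dagumKernel_le (by linarith) hδ₂ hlam hz
  have hrot := integral_ray_eq (by linarith [Real.pi_pos]) Real.pi_div_two_pos.le
    (by linarith [Real.pi_pos]) (differentiableOn_dagumKernel lam z (by linarith) hδ₂)
    ((integrableOn_min_one_rpow (by linarith)).const_mul C)
    (by simpa [mul_left_comm] using (tendsto_mul_min_one_rpow_nhdsGT_zero (-δ)).const_mul C)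
    (by simpa [mul_left_comm] using (tendsto_mul_min_one_rpow_atTop (by linarith)).const_mul C) hC
  simpa [exp_pi_div_two_mul_I] using hrot

theorem dagum_spectral_density_dim_one_general (hδ₁ : 1 < δ) (hδ₂ : δ < 2) (hlam : 0 ≤ lam)
    (hz : 0 ≤ z) :
    IntegrableOn (fun t : ℝ ↦ Real.cos (z * t) * dagum lam δ t) (Ioi 0) ∧
    IntegrableOn (fun r : ℝ ↦ dagumRot lam δ r * exp (-(z * r))) (Ioi 0) ∧
    (1 / Real.pi) * ∫ t in Ioi (0 : ℝ), Real.cos (z * t) * dagum lam δ t =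
      -(1 / Real.pi) * (∫ r in Ioi (0 : ℝ), dagumRot lam δ r * exp (-(z * r))).im := by
  have hδ : |δ| < 2 := abs_lt.2 ⟨by linarith, hδ₂⟩
  have hre : EqOn (fun t : ℝ ↦ (dagumKernel lam δ z t).re)
      (fun t ↦ Real.cos (z * t) * dagum lam δ t) (Ioi 0) :=
    fun _ ht ↦ re_dagumKernel_ofReal lam δ z ht
  have hrot : EqOn (fun r : ℝ ↦ dagumKernel lam δ z (r * I))
      (fun r ↦ dagumRot lam δ r * exp (-(z * r))) (Ioi 0) :=
    fun _ hr ↦ dagumKernel_ofReal_mul_I lam z hδ hr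
  have hint_real : IntegrableOn (fun t : ℝ ↦ dagumKernel lam δ z t) (Ioi 0) := by
    simpa using integrableOn_dagumKernel_ray hδ₁ hδ₂ hlam hz (left_mem_Icc.2 Real.pi_div_two_pos.le)
  have hint_imag : IntegrableOn (fun r : ℝ ↦ dagumKernel lam δ z (r * I)) (Ioi 0) := by
    simpa [exp_pi_div_two_mul_I] using
      integrableOn_dagumKernel_ray hδ₁ hδ₂ hlam hz (right_mem_Icc.2 Real.pi_div_two_pos.le)
  refine ⟨IntegrableOn.congr_fun hint_real.re hre measurableSet_Ioi,
    hint_imag.congr_fun hrot measurableSet_Ioi, ?_⟩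
  have hkernel := congrArg re (integral_dagumKernel_ofReal hδ₁ hδ₂ hlam hz)
  rw [setIntegral_congr_fun measurableSet_Ioi hrot, I_mul_re] at hkernel
  have hcos : ∫ t in Ioi (0 : ℝ), Real.cos (z * t) * dagum lam δ t =
      (∫ t in Ioi (0 : ℝ), dagumKernel lam δ z t).re := by
    rw [← setIntegral_congr_fun measurableSet_Ioi hre]
    exact integral_re hint_real
  rw [hcos, hkernel, neg_mul, mul_neg]

end Dagum

/-- For `d = 1`, `δ ∈ (1,2)`, `λ > 0`, `δλ ∈ (0,2)` and `z > 0`, the one-dimensional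
Dagum isotropic spectral density satisfies
`(1/π) ∫₀^∞ cos(zt) D_{λ,δ}(t) dt
  = -(1/π) Im ∫₀^∞ (1 - e^{iπδλ/2} r^{δλ}/(1+e^{iπδ/2} r^δ)^λ) e^{-zr} dr`,
both integrals being convergent. -/
theorem dagum_spectral_density_dim_one (δ lam : ℝ) (hδ1 : 1 < δ) (hδ2 : δ < 2)
    (hlam : 0 < lam) (hdl0 : 0 < δ * lam) (hdl2 : δ * lam < 2) (z : ℝ) (hz : 0 < z) :
    IntegrableOn (fun t : ℝ => Real.cos (z * t) * dagum lam δ t) (Ioi 0) ∧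
    IntegrableOn (fun r : ℝ => dagumRot lam δ r * Complex.exp (-(z * r))) (Ioi 0) ∧
    (1 / Real.pi) * ∫ t in Ioi (0 : ℝ), Real.cos (z * t) * dagum lam δ t
      = -(1 / Real.pi) *
          (∫ r in Ioi (0 : ℝ), dagumRot lam δ r * Complex.exp (-(z * r))).im :=
  dagum_spectral_density_dim_one_general hδ1 hδ2 hlam.le hz.le
end

section
/- Let d = 1, δ ∈ (1,2), λ > 0 with δλ ∈ (0,2). Assume there exist C > 0 and τ > 0 such that for every nonnegative integer m the distance from (1+2m)/δ to the nearest integer is at least C(1+m)^{−τ} (in particular (1+2m)/δ is never an integer, so no Gamma factor below is evaluated at a pole). Then for every z > 0 both series below converge absolutely and (1/π) ∫₀^∞ cos(z t) D_{λ,δ}(t) dt = −( z^{−1} / (√π Γ(λ)) ) Σ_{n=1}^{∞} (−1)^n Γ(λ+n) Γ((1−nδ)/2) / ( n! Γ(nδ/2) ) (z/2)^{nδ} − ( 1/(√π Γ(λ) δ) ) Σ_{n=0}^{∞} (−1)^n Γ(λ+(1+2n)/δ) Γ(−(1+2n)/δ) / ( n! Γ(n+1/2) ) (z/2)^{2n}.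 -/
open MeasureTheory Set

/-- The general term of the first series in the Fox–Wright expansion of the
one-dimensional Dagum spectral density. -/
noncomputable def dagumTermA (lam δ z : ℝ) (n : ℕ) : ℝ :=
  (-1) ^ n * Real.Gamma (lam + n) * Real.Gamma ((1 - n * δ) / 2) /
    (n.factorial * Real.Gamma (n * δ / 2)) * (z / 2) ^ ((n : ℝ) * δ)

/-- The general term of the second series in the Fox–Wright expansion of the
one-dimensional Dagum spectral density. -/
noncomputable def dagumTermB (lam δ z : ℝ) (n : ℕ) : ℝ :=
  (-1) ^ n * Real.Gamma (lam + (1 + 2 * n) / δ) * Real.Gamma (-((1 + 2 * n) / δ)) /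
    (n.factorial * Real.Gamma (n + 1 / 2)) * (z / 2) ^ (2 * n)

/-! Write the Dagum function as `g (t ^ (-δ))` with `g v = 1 - (1 + v) ^ (-λ)`. Near infinity it is
a power series in `t ^ (-δ)`, while `cos (z * t)` is a power series in `t`. So the integral is cut
at `a = 2`, the cosine being expanded on `(0, a]` and `g` on `(a, ∞)`.

The moments of `cos` over `(a, ∞)` are known up to a convergent series: the Hadamard finite part of
`∫ t ^ (-y - 1) * cos t` over `(0, ∞)` is a quotient of Gamma values, and it differs from the
integral over `(a, ∞)` by the termwise integral `∑ c k * a ^ (2 k - y) / (2 k - y)` of the power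
series. In the same way the moments of `g` are Gamma values plus series. After multiplication by the
coefficients of the other function, these two families of correction series are, up to sign, the
rows and the columns of one double series with divisors `2 k + 1 - (n + 1) δ`. The divisors may be
small, but a lower bound `K * ρ ^ k` is enough for absolute convergence because the coefficients of
`cos` decay superexponentially. Hence the corrections cancel and only the Gamma values remain. -/

open Filter Real Topology

section TermwiseIntegration

variable {α : Type*} [MeasurableSpace α] {μ : Measure α} {φ w : α → ℝ} {c ν : ℕ → ℝ}
  {f : ℝ → ℝ} {b r : ℝ}

lemma norm_rpow_comp_mul_le (hφ : ∀ᵐ x ∂μ, φ x ∈ Ioc 0 b) {p : ℝ} (hp : r ≤ p) (k : ℝ) :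
    ∀ᵐ x ∂μ, ‖k * (φ x ^ p * w x)‖ ≤ ‖k * b ^ p‖ * b ^ (-r) * ‖φ x ^ r * w x‖ := by
  filter_upwards [hφ] with x ⟨hx0, hxb⟩
  have hb : 0 < b := hx0.trans_le hxb
  have hpow : φ x ^ p ≤ b ^ p * b ^ (-r) * φ x ^ r := calc
    φ x ^ p = φ x ^ (p - r) * φ x ^ r := by rw [← rpow_add hx0, sub_add_cancel]
    _ ≤ b ^ (p - r) * φ x ^ r := by gcongr
    _ = b ^ p * b ^ (-r) * φ x ^ r := by rw [← rpow_add hb, sub_eq_add_neg]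
  simp only [norm_mul, norm_of_nonneg (rpow_nonneg hx0.le _), norm_of_nonneg (rpow_nonneg hb.le _)]
  calc ‖k‖ * (φ x ^ p * ‖w x‖) ≤ ‖k‖ * (b ^ p * b ^ (-r) * φ x ^ r * ‖w x‖) := by gcongr
    _ = _ := by ring

lemma integrable_rpow_comp_mul (hφ : ∀ᵐ x ∂μ, φ x ∈ Ioc 0 b) (hφm : AEMeasurable φ μ)
    (hw : Integrable (fun x ↦ φ x ^ r * w x) μ) {p : ℝ} (hp : r ≤ p) :
    Integrable (fun x ↦ φ x ^ p * w x) μ := by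
  have hmeas : AEStronglyMeasurable (fun x ↦ φ x ^ p * w x) μ := by
    refine ((hφm.pow_const (p - r)).aestronglyMeasurable.mul hw.1).congr ?_
    filter_upwards [hφ] with x hx
    rw [Pi.mul_apply, ← mul_assoc, ← rpow_add hx.1, sub_add_cancel]
  exact (hw.norm.const_mul (‖1 * b ^ p‖ * b ^ (-r))).mono' hmeas
    (by simpa using norm_rpow_comp_mul_le (w := w) hφ hp 1)

lemma integrable_and_hasSum_integral_of_hasSum_rpow (hb : 0 < b) (hν : ∀ n, r ≤ ν n)
    (hf : ∀ t ∈ Ioc 0 b, HasSum (fun n ↦ c n * t ^ ν n) (f t))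
    (hφ : ∀ᵐ x ∂μ, φ x ∈ Ioc 0 b) (hφm : AEMeasurable φ μ)
    (hw : Integrable (fun x ↦ φ x ^ r * w x) μ) :
    Integrable (fun x ↦ f (φ x) * w x) μ ∧
      HasSum (fun n ↦ c n * ∫ x, φ x ^ ν n * w x ∂μ) (∫ x, f (φ x) * w x ∂μ) := by
  have hterm (n : ℕ) : Integrable (fun x ↦ c n * (φ x ^ ν n * w x)) μ :=
    (integrable_rpow_comp_mul hφ hφm hw (hν n)).const_mul _
  have hlim : ∀ᵐ x ∂μ, HasSum (fun n ↦ c n * (φ x ^ ν n * w x)) (f (φ x) * w x) := by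
    filter_upwards [hφ] with x hx
    simpa only [mul_assoc] using (hf _ hx).mul_right (w x)
  have hbound (n : ℕ) := norm_rpow_comp_mul_le (w := w) hφ (hν n) (c n)
  have hsummable (x : α) :
      Summable fun n ↦ ‖c n * b ^ ν n‖ * b ^ (-r) * ‖φ x ^ r * w x‖ :=
    ((hf b ⟨hb, le_rfl⟩).summable.norm.mul_right _).mul_right _
  have hbound_integrable :
      Integrable (fun x ↦ ∑' n, ‖c n * b ^ ν n‖ * b ^ (-r) * ‖φ x ^ r * w x‖) μ := by
    simpa only [tsum_mul_right] using hw.norm.const_mul _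
  constructor
  · refine hbound_integrable.mono' (aestronglyMeasurable_of_tendsto_ae atTop
      (fun n ↦ (integrable_finsetSum (Finset.range n) fun i _ ↦ hterm i).aestronglyMeasurable)
      (hlim.mono fun x hx ↦ hx.tendsto_sum_nat)) ?_
    filter_upwards [hlim, ae_all_iff.2 hbound] with x hx hle
    exact hx.norm_le_of_bounded (hsummable x).hasSum hle
  · simpa only [integral_const_mul] using hasSum_integral_of_dominated_convergence _
      (fun n ↦ (hterm n).aestronglyMeasurable) hbound (.of_forall hsummable) hbound_integrable hlim

end TermwiseIntegration

section PowerWeights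

variable {a p r y K : ℝ} {f f' : ℝ → ℝ}

lemma setIntegral_Ioc_rpow (ha : 0 ≤ a) (hp : -1 < p) :
    ∫ t in Ioc 0 a, t ^ p = a ^ (p + 1) / (p + 1) := by
  rw [← intervalIntegral.integral_of_le ha, integral_rpow (.inl hp),
    zero_rpow (by linarith), sub_zero]

lemma norm_rpow_mul_le_of_norm_le (ha : 0 < a) (hf : ∀ t ∈ Ioi a, ‖f t‖ ≤ K * t ^ (-r)) :
    ∀ t ∈ Ioi a, ‖t ^ p * f t‖ ≤ K * t ^ (p - r) := fun t ht ↦ by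
  have ht0 : 0 < t := ha.trans ht
  rw [norm_mul, norm_of_nonneg (rpow_nonneg ht0.le _), sub_eq_add_neg, rpow_add ht0,
    mul_left_comm]
  gcongr
  exact hf t ht

lemma integrableOn_Ioi_rpow_mul_of_norm_le (ha : 0 < a) (hp : p - r < -1)
    (hcont : ContinuousOn f (Ioi a)) (hf : ∀ t ∈ Ioi a, ‖f t‖ ≤ K * t ^ (-r)) :
    IntegrableOn (fun t ↦ t ^ p * f t) (Ioi a) := by
  refine ((integrableOn_Ioi_rpow_of_lt hp ha).const_mul K).mono' ?_
    ((ae_restrict_mem measurableSet_Ioi).mono (norm_rpow_mul_le_of_norm_le ha hf))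
  refine ContinuousOn.aestronglyMeasurable (.mul ?_ hcont) measurableSet_Ioi
  exact continuousOn_id.rpow_const fun t ht ↦ .inl (ha.trans ht).ne'

lemma integral_Ioi_rpow_mul_deriv (ha : 0 < a) (hyr : 0 < y + r)
    (hf : ∀ t ∈ Ici a, HasDerivAt f (f' t) t) (hbound : ∀ t ∈ Ioi a, ‖f t‖ ≤ K * t ^ (-r))
    (hint : IntegrableOn (fun t ↦ t ^ (-y) * f' t) (Ioi a)) :
    ∫ t in Ioi a, t ^ (-y) * f' t =
      y * (∫ t in Ioi a, t ^ (-y - 1) * f t) - a ^ (-y) * f a := by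
  have hf' (t : ℝ) (ht : t ∈ Ioi a) : HasDerivAt f (f' t) t := hf t (mem_Ici_of_Ioi ht)
  have hint' : IntegrableOn (fun t ↦ t ^ (-y - 1) * f t) (Ioi a) :=
    integrableOn_Ioi_rpow_mul_of_norm_le ha (by linarith)
      (fun t ht ↦ (hf' t ht).continuousAt.continuousWithinAt) hbound
  have htop : Tendsto (fun t ↦ t ^ (-y) * f t) atTop (𝓝 0) := by
    refine squeeze_zero_norm'
      ((eventually_gt_atTop a).mono (norm_rpow_mul_le_of_norm_le ha hbound)) ?_
    simpa [sub_eq_add_neg, add_comm] using (tendsto_rpow_neg_atTop hyr).const_mul K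
  have hbdry : Tendsto (fun t ↦ t ^ (-y) * f t) (𝓝[>] a) (𝓝 (a ^ (-y) * f a)) :=
    ((continuousAt_rpow_const a _ (.inl ha.ne')).mul
      (hf a self_mem_Ici).continuousAt).continuousWithinAt
  rw [integral_Ioi_mul_deriv_eq_deriv_mul
    (fun t ht ↦ hasDerivAt_rpow_const (p := -y) (.inl (ha.trans ht).ne')) hf' hint
    (by simpa only [IntegrableOn, Pi.mul_def, mul_assoc] using hint'.const_mul (-y))
    hbdry htop]
  simp only [mul_assoc, integral_const_mul]
  ring

end PowerWeights

/-- `V` is the Hadamard finite part at the exponent `y` of the divergent integral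
`∫ t in Ioi 0, t ^ (-y - 1) * f t`, where `f` has the expansion `∑ c n * t ^ ν n` on `(0, a]`:
the part over `(0, a]` is integrated term by term, dropping the divergent boundary values at `0`.
Since `x / 0 = 0`, a term with `ν n = y` contributes nothing; such a term is harmless only when
`c n = 0`. -/
structure HasMellinFinitePart (a : ℝ) (ν c : ℕ → ℝ) (f : ℝ → ℝ) (y V : ℝ) : Prop where
  integrableOn : IntegrableOn (fun t ↦ t ^ (-y - 1) * f t) (Ioi a)
  hasSum : HasSum (fun n ↦ c n * (a ^ (ν n - y) / (ν n - y)))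
    (V - ∫ t in Ioi a, t ^ (-y - 1) * f t)

namespace HasMellinFinitePart

variable {a y V : ℝ} {ν c : ℕ → ℝ} {f f' g : ℝ → ℝ}

theorem of_integrableOn (ha : 0 < a) (hν : ∀ n, ν 0 ≤ ν n) (hy : y < ν 0)
    (hf : ∀ t ∈ Ioc 0 a, HasSum (fun n ↦ c n * t ^ ν n) (f t))
    (hint : IntegrableOn (fun t ↦ t ^ (-y - 1) * f t) (Ioi 0)) :
    HasMellinFinitePart a ν c f y (∫ t in Ioi 0, t ^ (-y - 1) * f t) := by
  have hint' : IntegrableOn (fun t ↦ t ^ (-y - 1) * f t) (Ioi a) :=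
    hint.mono_set (Ioi_subset_Ioi ha.le)
  refine ⟨hint', ?_⟩
  have hpow (p : ℝ) :
      EqOn (fun t : ℝ ↦ t ^ p * t ^ (-y - 1)) (fun t ↦ t ^ (p - y - 1)) (Ioc 0 a) :=
    fun t ht ↦ by simp only [← rpow_add ht.1]; ring_nf
  have hweight : IntegrableOn (fun t : ℝ ↦ t ^ ν 0 * t ^ (-y - 1)) (Ioc 0 a) :=
    (integrableOn_congr_fun (hpow _) measurableSet_Ioc).2 <|
      (intervalIntegrable_iff_integrableOn_Ioc_of_le ha.le).1 <|
        intervalIntegral.intervalIntegrable_rpow' (by linarith)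
  have hsum := (integrable_and_hasSum_integral_of_hasSum_rpow ha hν hf
    (ae_restrict_mem measurableSet_Ioc) aemeasurable_id hweight).2
  have hsplit : (∫ t in Ioi 0, t ^ (-y - 1) * f t) - ∫ t in Ioi a, t ^ (-y - 1) * f t =
      ∫ t in Ioc 0 a, f t * t ^ (-y - 1) := by
    rw [← Ioc_union_Ioi_eq_Ioi ha.le, setIntegral_union (Ioc_disjoint_Ioi le_rfl)
      measurableSet_Ioi (hint.mono_set Ioc_subset_Ioi_self) hint', add_sub_cancel_right]
    simp only [mul_comm]
  rw [hsplit]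
  refine hsum.congr_fun fun n ↦ ?_
  rw [setIntegral_congr_fun measurableSet_Ioc (hpow (ν n)), setIntegral_Ioc_rpow ha.le
    (by linarith [hν n]), sub_add_cancel]

/-- The finite part of a monomial is zero. -/
theorem succ_iff (ha : 0 < a) (hy : ν 0 < y) (hg : ∀ t ∈ Ioi a, g t = c 0 * t ^ ν 0 + f t) :
    HasMellinFinitePart a (fun n ↦ ν (n + 1)) (fun n ↦ c (n + 1)) f y V ↔
      HasMellinFinitePart a ν c g y V := by
  have hmono : IntegrableOn (fun t : ℝ ↦ c 0 * t ^ (ν 0 - y - 1)) (Ioi a) :=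
    (integrableOn_Ioi_rpow_of_lt (by linarith) ha).const_mul _
  have hgf : EqOn (fun t ↦ t ^ (-y - 1) * g t)
      (fun t ↦ c 0 * t ^ (ν 0 - y - 1) + t ^ (-y - 1) * f t) (Ioi a) := fun t ht ↦ by
    simp only [hg t ht, mul_add, show ν 0 - y - 1 = (-y - 1) + ν 0 by ring,
      rpow_add (ha.trans ht)]
    ring
  have hint : IntegrableOn (fun t ↦ t ^ (-y - 1) * g t) (Ioi a) ↔
      IntegrableOn (fun t ↦ t ^ (-y - 1) * f t) (Ioi a) :=
    (integrableOn_congr_fun hgf measurableSet_Ioi).trans <|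
      integrable_add_iff_integrable_right hmono
  have hval (hf : IntegrableOn (fun t ↦ t ^ (-y - 1) * f t) (Ioi a)) :
      V - ∫ t in Ioi a, t ^ (-y - 1) * g t =
        (V - ∫ t in Ioi a, t ^ (-y - 1) * f t) + c 0 * (a ^ (ν 0 - y) / (ν 0 - y)) := by
    rw [setIntegral_congr_fun measurableSet_Ioi hgf, integral_add hmono hf, integral_const_mul,
      integral_Ioi_rpow_of_lt (by linarith) ha, sub_add_cancel]
    ring
  refine ⟨fun h ↦ ⟨hint.2 h.integrableOn, ?_⟩, fun h ↦ ⟨hint.1 h.integrableOn, ?_⟩⟩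
  · rw [hval h.integrableOn]
    exact (hasSum_nat_add_iff' 1).1 (by simpa using h.hasSum)
  · have := h.hasSum
    rw [hval (hint.1 h.integrableOn)] at this
    simpa using (hasSum_nat_add_iff' 1).2 this

theorem const_mul (h : HasMellinFinitePart a ν c f y V) (k : ℝ) :
    HasMellinFinitePart a ν (fun n ↦ k * c n) (fun t ↦ k * f t) y (k * V) where
  integrableOn := by simpa only [IntegrableOn, mul_left_comm] using h.integrableOn.const_mul k
  hasSum := by
    simpa only [mul_left_comm _ k, integral_const_mul, mul_sub, mul_assoc] using h.hasSum.mul_left k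

theorem comp_mul_left {z : ℝ} (hz : 0 < z) (ha : 0 < a)
    (h : HasMellinFinitePart (z * a) ν c f y V) :
    HasMellinFinitePart a ν (fun n ↦ c n * z ^ ν n) (fun t ↦ f (z * t)) y (z ^ y * V) := by
  have hscale : EqOn (fun t ↦ t ^ (-y - 1) * f (z * t))
      (fun t ↦ z ^ (y + 1) * ((z * t) ^ (-y - 1) * f (z * t))) (Ioi a) := fun t ht ↦ by
    have hcancel : z ^ (y + 1) * z ^ (-y - 1) = 1 := by rw [← rpow_add hz]; simp
    simp only [mul_rpow hz.le (ha.trans ht).le, ← mul_assoc, hcancel, one_mul]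
  constructor
  · rw [integrableOn_congr_fun hscale measurableSet_Ioi]
    exact ((integrableOn_Ioi_comp_mul_left_iff _ a hz).2 h.integrableOn).const_mul _
  · have hval : z ^ y * V - ∫ t in Ioi a, t ^ (-y - 1) * f (z * t) =
        z ^ y * (V - ∫ t in Ioi (z * a), t ^ (-y - 1) * f t) := by
      rw [setIntegral_congr_fun measurableSet_Ioi hscale, integral_const_mul,
        integral_comp_mul_left_Ioi (fun t ↦ t ^ (-y - 1) * f t) a hz, rpow_add_one hz.ne']
      simp only [smul_eq_mul]
      field_simp
    rw [hval]
    refine (h.hasSum.mul_left (z ^ y)).congr_fun fun n ↦ ?_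
    rw [mul_rpow hz.le ha.le, rpow_sub hz]
    field_simp

theorem of_hasDerivAt {K r : ℝ} (ha : 0 < a) (hy : y ≠ 0) (hyr : 0 < y + r)
    (hf : ∀ t ∈ Ici a, HasDerivAt f (f' t) t) (hbound : ∀ t ∈ Ioi a, ‖f t‖ ≤ K * t ^ (-r))
    (hfa : HasSum (fun n ↦ c n * a ^ ν n) (f a)) (hc : ∀ n, ν n = y → c n = 0)
    (h : HasMellinFinitePart a (fun n ↦ ν n - 1) (fun n ↦ ν n * c n) f' (y - 1) V) :
    HasMellinFinitePart a ν c f y (V / y) := by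
  have hint : IntegrableOn (fun t ↦ t ^ (-y - 1) * f t) (Ioi a) :=
    integrableOn_Ioi_rpow_mul_of_norm_le ha (by linarith)
      (fun t ht ↦ (hf t (mem_Ici_of_Ioi ht)).continuousAt.continuousWithinAt) hbound
  refine ⟨hint, ?_⟩
  have hval : V / y - ∫ t in Ioi a, t ^ (-y - 1) * f t =
      (V - (∫ t in Ioi a, t ^ (-(y - 1) - 1) * f' t) - a ^ (-y) * f a) / y := by
    rw [show -(y - 1) - 1 = -y by ring, integral_Ioi_rpow_mul_deriv ha hyr hf hbound
      (by simpa using h.integrableOn)]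
    field_simp
    ring
  rw [hval]
  refine ((h.hasSum.sub (hfa.mul_left (a ^ (-y)))).div_const y).congr_fun fun n ↦ ?_
  rw [show ν n - 1 - (y - 1) = ν n - y by ring, rpow_sub ha, rpow_neg ha.le]
  obtain hn | hn := eq_or_ne (ν n) y
  · simp [hc n hn]
  · field_simp [sub_ne_zero.2 hn]
    ring

end HasMellinFinitePart

section Subordination

variable {α : Type*} [MeasurableSpace α] {μ : Measure α} [SFinite μ] {h ψ : α → ℝ} {L : ℝ → ℝ}
  {s : ℝ}

/-- The Gamma integral `ψ ^ (-s) = Γ(s)⁻¹ * ∫ u in Ioi 0, u ^ (s - 1) * exp (-u * ψ)`, followed by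
Tonelli. -/
lemma integrable_and_integral_mul_rpow_neg (hs : 0 < s) (hψ : ∀ᵐ x ∂μ, 0 < ψ x)
    (hψm : AEMeasurable ψ μ) (hh : ∀ᵐ x ∂μ, 0 ≤ h x) (hhm : AEStronglyMeasurable h μ)
    (hLap : ∀ u > 0, Integrable (fun x ↦ h x * exp (-(ψ x * u))) μ)
    (hL : ∀ u > 0, ∫ x, h x * exp (-(ψ x * u)) ∂μ = L u)
    (hint : IntegrableOn (fun u ↦ u ^ (s - 1) * L u) (Ioi 0)) :
    Integrable (fun x ↦ h x * ψ x ^ (-s)) μ ∧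
      ∫ x, h x * ψ x ^ (-s) ∂μ = (∫ u in Ioi 0, u ^ (s - 1) * L u) / Gamma s := by
  set F : ℝ × α → ℝ := fun q ↦ q.1 ^ (s - 1) * (h q.2 * exp (-(ψ q.2 * q.1)))
  have hFm : AEStronglyMeasurable F ((volume.restrict (Ioi 0)).prod μ) := by
    refine ((measurable_fst.pow_const (s - 1)).aestronglyMeasurable).mul
      (hhm.comp_snd.mul (measurable_exp.comp_aemeasurable ?_).aestronglyMeasurable)
    exact (hψm.comp_snd.mul measurable_fst.aemeasurable).neg
  have hrow : ∀ u ∈ Ioi (0 : ℝ), ∫ x, F (u, x) ∂μ = u ^ (s - 1) * L u := fun u hu ↦ by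
    rw [← hL u hu, ← integral_const_mul]
  have hF : Integrable F ((volume.restrict (Ioi 0)).prod μ) := by
    refine (integrable_prod_iff hFm).2 ⟨?_, ?_⟩
    · filter_upwards [ae_restrict_mem measurableSet_Ioi] with u hu
      exact (hLap u hu).const_mul (u ^ (s - 1))
    · refine (integrableOn_congr_fun (fun u hu ↦ ?_) measurableSet_Ioi).2 hint
      rw [← hrow u hu]
      refine integral_congr_ae (hh.mono fun x hx ↦ norm_of_nonneg ?_)
      have : 0 ≤ u ^ (s - 1) := rpow_nonneg (le_of_lt hu) _
      positivity
  have hcol : (fun x ↦ ∫ u in Ioi 0, F (u, x)) =ᵐ[μ] fun x ↦ Gamma s * (h x * ψ x ^ (-s)) := by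
    filter_upwards [hψ] with x hx
    simp only [F, mul_left_comm _ (h x), integral_const_mul]
    rw [integral_rpow_mul_exp_neg_mul_Ioi hs hx, rpow_neg hx.le, one_div, inv_rpow hx.le]
    ring
  have hΓ : Gamma s ≠ 0 := (Gamma_pos_of_pos hs).ne'
  have hmul : Integrable (fun x ↦ Gamma s * (h x * ψ x ^ (-s))) μ :=
    hF.integral_prod_right.congr hcol
  refine ⟨(integrable_const_mul_iff hΓ.isUnit _).1 hmul, ?_⟩
  rw [eq_div_iff hΓ, mul_comm, ← integral_const_mul, ← integral_congr_ae hcol,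
    ← integral_integral_swap (f := fun u x ↦ F (u, x)) hF,
    setIntegral_congr_fun measurableSet_Ioi hrow]

end Subordination

lemma integrableOn_and_integral_rpow_mul_one_add_rpow_neg {p r s : ℝ} (hr : 0 < r) (hp : 0 < p)
    (hps : p < r * s) :
    IntegrableOn (fun t : ℝ ↦ t ^ (p - 1) * (1 + t ^ r) ^ (-s)) (Ioi 0) ∧
      ∫ t in Ioi (0 : ℝ), t ^ (p - 1) * (1 + t ^ r) ^ (-s) =
        Gamma (p / r) * Gamma (s - p / r) / (r * Gamma s) := by
  have hs : 0 < s := pos_of_mul_pos_right (hp.trans hps) hr.le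
  have hpr : 0 < s - p / r := by rw [sub_pos, div_lt_iff₀ hr]; linarith
  have hfactor (u t : ℝ) : t ^ (p - 1) * exp (-((1 + t ^ r) * u)) =
      exp (-u) * (t ^ (p - 1) * exp (-u * t ^ r)) := by
    rw [mul_left_comm, ← exp_add]; ring_nf
  have hL : ∀ u > 0, ∫ t in Ioi 0, t ^ (p - 1) * exp (-((1 + t ^ r) * u)) =
      exp (-u) * (u ^ (-(p / r)) * (1 / r) * Gamma (p / r)) := fun u hu ↦ by
    simp only [hfactor, integral_const_mul]
    rw [integral_rpow_mul_exp_neg_mul_rpow hr (by linarith) hu, sub_add_cancel, neg_div]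
  have hweight : EqOn
      (fun u ↦ u ^ (s - 1) * (exp (-u) * (u ^ (-(p / r)) * (1 / r) * Gamma (p / r))))
      (fun u ↦ Gamma (p / r) / r * (exp (-u) * u ^ (s - p / r - 1))) (Ioi 0) := fun u hu ↦ by
    simp only [show s - p / r - 1 = (s - 1) + -(p / r) by ring, rpow_add hu]
    ring
  obtain ⟨hint, hval⟩ := integrable_and_integral_mul_rpow_neg
    (μ := volume.restrict (Ioi (0 : ℝ))) hs (h := fun t ↦ t ^ (p - 1)) (ψ := fun t ↦ 1 + t ^ r)
    ((ae_restrict_mem measurableSet_Ioi).mono fun t ht ↦ by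
      have := rpow_pos_of_pos ht r; positivity)
    (by fun_prop) ((ae_restrict_mem measurableSet_Ioi).mono fun t ht ↦ rpow_nonneg (le_of_lt ht) _)
    (by fun_prop) (fun u hu ↦ by
      simp only [hfactor]
      exact (integrableOn_rpow_mul_exp_neg_mul_rpow (by linarith) hr hu).const_mul _) hL
    ((integrableOn_congr_fun hweight measurableSet_Ioi).2
      ((GammaIntegral_convergent hpr).const_mul _))
  refine ⟨hint, hval.trans ?_⟩
  rw [setIntegral_congr_fun measurableSet_Ioi hweight, integral_const_mul,
    ← Gamma_eq_integral hpr]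
  field_simp

section Cosine

/-- The finite part of `∫ t in Ioi 0, t ^ (-y - 1) * cos t`, see `hasMellinFinitePart_cos`. -/
noncomputable def cosMellin (y : ℝ) : ℝ :=
  √π * 2 ^ (-y - 1) * Gamma (-(y / 2)) / Gamma ((y + 1) / 2)

lemma cosMellin_eq_neg_cosMellin_sub_two_div {y : ℝ} (hy : 1 < y) :
    cosMellin y = -cosMellin (y - 2) / (y - 1) / y := by
  have hden : Gamma ((y + 1) / 2) = (y - 1) / 2 * Gamma ((y - 1) / 2) := by
    rw [← Gamma_add_one (by linarith)]; ring_nf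
  have hnum : Gamma (-((y - 2) / 2)) = -(y / 2) * Gamma (-(y / 2)) := by
    rw [← Gamma_add_one (by linarith)]; ring_nf
  have hpow : (2 : ℝ) ^ (-(y - 2) - 1) = 4 * 2 ^ (-y - 1) := by
    rw [show -(y - 2) - 1 = 2 + (-y - 1) by ring, rpow_add two_pos]; norm_num
  have hpos : 0 < Gamma ((y - 1) / 2) := Gamma_pos_of_pos (by linarith)
  have hy1 : y - 1 ≠ 0 := by linarith
  unfold cosMellin
  rw [hden, hnum, hpow, show y - 2 + 1 = y - 1 by ring]
  field_simp
  ring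

/-- The duplication formula at `(y + 1) / 2`. -/
lemma cosMellin_eq_neg_Gamma_mul_Gamma {y : ℝ} (hy : 0 < y) :
    cosMellin y = -(Gamma (y / 2) * Gamma (1 - y / 2) / (2 * Gamma (y + 1))) := by
  have hreflect : Gamma (1 - y / 2) = -(y / 2) * Gamma (-(y / 2)) := by
    rw [← Gamma_add_one (by linarith)]; ring_nf
  have hshift : Gamma ((y + 1) / 2 + 1 / 2) = y / 2 * Gamma (y / 2) := by
    rw [← Gamma_add_one (by positivity)]; ring_nf
  have hdup := Gamma_mul_Gamma_add_half ((y + 1) / 2)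
  have hpow : (2 : ℝ) ^ (1 - (y + 1)) = 2 * 2 ^ (-y - 1) := by
    rw [show 1 - (y + 1) = 1 + (-y - 1) by ring, rpow_add two_pos, rpow_one]
  rw [hshift, show 2 * ((y + 1) / 2) = y + 1 by ring, hpow] at hdup
  have hden : Gamma ((y + 1) / 2) ≠ 0 := (Gamma_pos_of_pos (by positivity)).ne'
  have hden' : Gamma (y + 1) ≠ 0 := (Gamma_pos_of_pos (by positivity)).ne'
  unfold cosMellin
  rw [hreflect, div_eq_iff hden]
  field_simp
  linear_combination (-2 * Gamma (-(y / 2))) * hdup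

lemma integrableOn_and_integral_cos_mul_exp_neg {u : ℝ} (hu : 0 < u) :
    IntegrableOn (fun t ↦ cos t * exp (-(t * u))) (Ioi 0) ∧
      ∫ t in Ioi 0, cos t * exp (-(t * u)) = u / (1 + u ^ 2) := by
  have hre : (Complex.I - u).re < 0 := by simpa
  have hexp (t : ℝ) : (Complex.exp ((Complex.I - u) * t)).re = cos t * exp (-(t * u)) := by
    simp [Complex.exp_re, mul_comm]
  have hint := integrableOn_exp_mul_complex_Ioi hre 0
  constructor
  · exact hint.re.congr (.of_forall hexp)
  · have := congrArg Complex.re (integral_exp_mul_complex_Ioi hre 0)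
    rw [← Complex.reCLM_apply, ← ContinuousLinearMap.integral_comp_comm _ hint] at this
    simpa [hexp, Complex.div_re, Complex.normSq_apply, sq, add_comm] using this

lemma integrableOn_and_integral_one_sub_cos {y : ℝ} (hy0 : 0 < y) (hy2 : y < 2) :
    IntegrableOn (fun t ↦ (1 - cos t) * t ^ (-(y + 1))) (Ioi 0) ∧
      ∫ t in Ioi 0, (1 - cos t) * t ^ (-(y + 1)) = -cosMellin y := by
  have hsplit (u t : ℝ) : (1 - cos t) * exp (-(t * u)) =
      exp (-u * t) - cos t * exp (-(t * u)) := by ring_nf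
  have hL : ∀ u > 0, ∫ t in Ioi 0, (1 - cos t) * exp (-(t * u)) = u⁻¹ - u / (1 + u ^ 2) :=
    fun u hu ↦ by
      have hcos := integrableOn_and_integral_cos_mul_exp_neg hu
      simp only [hsplit]
      rw [integral_sub (integrableOn_exp_mul_Ioi (by linarith) 0) hcos.1, hcos.2,
        integral_exp_mul_Ioi (by linarith)]
      simp
  have hweight : EqOn (fun u : ℝ ↦ u ^ (y + 1 - 1) * (u⁻¹ - u / (1 + u ^ 2)))
      (fun u ↦ u ^ (y - 1) * (1 + u ^ (2 : ℝ)) ^ (-1 : ℝ)) (Ioi 0) := fun u hu ↦ by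
    have hu' : u ≠ 0 := (mem_Ioi.1 hu).ne'
    have : 1 + u ^ 2 ≠ 0 := by positivity
    simp only [rpow_neg_one, rpow_two, add_sub_cancel_right, rpow_sub_one hu']
    field_simp
    ring
  have hbeta := integrableOn_and_integral_rpow_mul_one_add_rpow_neg two_pos hy0
    (s := 1) (by linarith)
  obtain ⟨hint, hval⟩ := integrable_and_integral_mul_rpow_neg (μ := volume.restrict (Ioi 0))
    (h := fun t : ℝ ↦ 1 - cos t) (ψ := fun t ↦ t) (s := y + 1) (by positivity)
    (ae_restrict_mem measurableSet_Ioi) (by fun_prop)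
    (.of_forall fun t ↦ sub_nonneg.2 (cos_le_one t)) (by fun_prop)
    (fun u hu ↦ by
      simp only [hsplit]
      exact (integrableOn_exp_mul_Ioi (by linarith) 0).sub
        (integrableOn_and_integral_cos_mul_exp_neg hu).1) hL
    ((integrableOn_congr_fun hweight measurableSet_Ioi).2 hbeta.1)
  refine ⟨hint, hval.trans ?_⟩
  rw [setIntegral_congr_fun measurableSet_Ioi hweight, hbeta.2,
    cosMellin_eq_neg_Gamma_mul_Gamma hy0, Gamma_one, neg_neg, mul_one, div_div]

lemma hasSum_cos_rpow (t : ℝ) :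
    HasSum (fun n : ℕ ↦ (-1 : ℝ) ^ n / (2 * n).factorial * t ^ (2 * n : ℝ)) (cos t) := by
  refine (hasSum_cos t).congr_fun fun n ↦ ?_
  rw [div_mul_eq_mul_div]; norm_cast

lemma hasSum_sin_rpow (t : ℝ) :
    HasSum (fun n : ℕ ↦ (-1 : ℝ) ^ n / (2 * n + 1).factorial * t ^ (2 * n + 1 : ℝ)) (sin t) := by
  refine (hasSum_sin t).congr_fun fun n ↦ ?_
  rw [div_mul_eq_mul_div]; norm_cast

lemma hasMellinFinitePart_cos_of_lt_two {a y : ℝ} (ha : 0 < a) (hy0 : 0 < y) (hy2 : y < 2) :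
    HasMellinFinitePart a (fun n ↦ 2 * n) (fun n ↦ (-1) ^ n / (2 * n).factorial) cos y
      (cosMellin y) := by
  obtain ⟨hint, hval⟩ := integrableOn_and_integral_one_sub_cos hy0 hy2
  have hneg (t : ℝ) : t ^ (-y - 1) * (cos t - 1) = -((1 - cos t) * t ^ (-(y + 1))) := by
    ring_nf
  have hcos := HasMellinFinitePart.of_integrableOn (f := fun t ↦ cos t - 1) (y := y) ha
    (ν := fun n ↦ 2 * (n + 1 : ℕ)) (c := fun n ↦ (-1) ^ (n + 1) / (2 * (n + 1)).factorial)
    (fun n ↦ by simp) (by simpa)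
    (fun t _ ↦ by simpa using (hasSum_nat_add_iff' 1).2 (hasSum_cos_rpow t))
    (by simp only [hneg]; exact hint.neg)
  rw [← HasMellinFinitePart.succ_iff (f := fun t ↦ cos t - 1) ha (by simpa) (by simp)]
  simpa only [hneg, integral_neg, hval, neg_neg] using hcos

lemma hasMellinFinitePart_cos_of_sub_two {a y : ℝ} (ha : 0 < a) (hy2 : 2 < y)
    (hy : ∀ k : ℕ, y ≠ 2 * k)
    (h : HasMellinFinitePart a (fun n ↦ 2 * n) (fun n ↦ (-1) ^ n / (2 * n).factorial) cos (y - 2)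
      (cosMellin (y - 2))) :
    HasMellinFinitePart a (fun n ↦ 2 * n) (fun n ↦ (-1) ^ n / (2 * n).factorial) cos y
      (cosMellin y) := by
  have hsin : HasMellinFinitePart a (fun n ↦ 2 * n + 1) (fun n ↦ (-1) ^ n / (2 * n + 1).factorial)
      sin (y - 1) (cosMellin (y - 2) / (y - 1)) := by
    refine .of_hasDerivAt (f' := cos) (K := 1) (r := 0) ha (by linarith) (by linarith)
      (fun t _ ↦ hasDerivAt_sin t) (fun t _ ↦ by simpa using abs_sin_le_one t)
      (hasSum_sin_rpow a) (fun n hn ↦ absurd ?_ (hy (n + 1))) ?_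
    · push_cast; linarith
    · convert h using 1
      · ext n; ring
      · ext n; rw [Nat.factorial_succ]; push_cast; field_simp
      · ring
  rw [cosMellin_eq_neg_cosMellin_sub_two_div (by linarith)]
  refine .of_hasDerivAt (f' := fun t ↦ -1 * sin t) (K := 1) (r := 0) ha (by linarith)
    (by linarith) (fun t _ ↦ by simpa using hasDerivAt_cos t)
    (fun t _ ↦ by simpa using abs_cos_le_one t) (hasSum_cos_rpow a)
    (fun n hn ↦ absurd hn.symm (hy n)) ?_
  refine (HasMellinFinitePart.succ_iff (f := fun t ↦ -1 * sin t) ha (by norm_num; linarith)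
    fun t _ ↦ by simp).1 ?_
  convert hsin.const_mul (-1) using 1
  · ext n; push_cast; ring
  · ext n
    rw [show 2 * (n + 1) = 2 * n + 1 + 1 by ring, Nat.factorial_succ (2 * n + 1)]
    push_cast
    field_simp
    ring
  · ring

theorem hasMellinFinitePart_cos {a y : ℝ} (ha : 0 < a) (hy0 : 0 < y) (hy : ∀ k : ℕ, y ≠ 2 * k) :
    HasMellinFinitePart a (fun n ↦ 2 * n) (fun n ↦ (-1) ^ n / (2 * n).factorial) cos y
      (cosMellin y) := by
  obtain ⟨m, hm⟩ : ∃ m : ℕ, y < 2 * (m + 1) := by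
    obtain ⟨m, hm⟩ := exists_nat_gt y
    exact ⟨m, by linarith⟩
  induction m generalizing y with
  | zero => exact hasMellinFinitePart_cos_of_lt_two ha hy0 (by simpa using hm)
  | succ m ih =>
    obtain hlt | heq | hgt := lt_trichotomy y 2
    · exact hasMellinFinitePart_cos_of_lt_two ha hy0 hlt
    · exact absurd heq (by simpa using hy 1)
    · refine hasMellinFinitePart_cos_of_sub_two ha hgt hy (ih (by linarith) (fun k hk ↦ ?_) ?_)
      · exact hy (k + 1) (by push_cast; linarith)
      · push_cast at hm; linarith

end Cosine

section Binomial

lemma succ_mul_choose_succ (x : ℝ) (n : ℕ) :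
    ((n : ℝ) + 1) * Ring.choose x (n + 1) = x * Ring.choose (x - 1) n := by
  simpa using Ring.choose_smul_choose x (Nat.le_add_left 1 n)

lemma choose_neg_eq_Gamma_div {s : ℝ} (hs : 0 < s) (n : ℕ) :
    Ring.choose (-s) n = (-1) ^ n * Gamma (s + n) / (Gamma s * n.factorial) := by
  induction n generalizing s with
  | zero => simp [(Gamma_pos_of_pos hs).ne']
  | succ n ih =>
    have hΓ : Gamma s ≠ 0 := (Gamma_pos_of_pos hs).ne'
    have hrec := succ_mul_choose_succ (-s) n
    rw [← neg_add', ih (by linarith : 0 < s + 1), Gamma_add_one hs.ne',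
      show s + 1 + n = s + (n + 1 : ℕ) by push_cast; ring] at hrec
    field_simp at hrec
    rw [eq_div_iff (by positivity), Nat.factorial_succ, pow_succ]
    push_cast at hrec ⊢
    linear_combination hrec

lemma hasSum_one_add_rpow (p : ℝ) {t : ℝ} (ht0 : 0 ≤ t) (ht1 : t < 1) :
    HasSum (fun n : ℕ ↦ Ring.choose p n * t ^ (n : ℝ)) ((1 + t) ^ p) := by
  have ht : t ∈ Metric.eball (0 : ℝ) 1 := by
    rw [← ENNReal.ofReal_one, Metric.eball_ofReal]
    simpa [abs_of_nonneg ht0] using ht1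
  simpa [binomialSeries, mul_comm] using one_add_rpow_hasFPowerSeriesOnBall_zero.hasSum ht

variable {a s y : ℝ}

lemma hasMellinFinitePart_one_add_rpow_neg_of_neg (ha0 : 0 < a) (ha1 : a < 1) (hsy : 0 < s + y)
    (hy : y < 0) :
    HasMellinFinitePart a (fun n ↦ n) (Ring.choose (-s)) (fun t ↦ (1 + t) ^ (-s)) y
      (Gamma (-y) * Gamma (s + y) / Gamma s) := by
  have hbeta := integrableOn_and_integral_rpow_mul_one_add_rpow_neg one_pos (neg_pos.2 hy)
    (s := s) (by linarith)
  simp only [rpow_one, div_one, one_mul, sub_neg_eq_add] at hbeta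
  rw [← hbeta.2]
  exact .of_integrableOn ha0 (by simp) (by simpa)
    (fun t ht ↦ hasSum_one_add_rpow _ ht.1.le (ht.2.trans_lt ha1)) hbeta.1

lemma hasMellinFinitePart_one_add_rpow_neg_of_sub_one (ha0 : 0 < a) (ha1 : a < 1) (hs : 0 < s)
    (hy0 : 0 < y) (hy : ∀ k : ℕ, y ≠ k)
    (h : HasMellinFinitePart a (fun n ↦ n) (Ring.choose (-(s + 1))) (fun t ↦ (1 + t) ^ (-(s + 1)))
      (y - 1) (Gamma (-(y - 1)) * Gamma (s + 1 + (y - 1)) / Gamma (s + 1))) :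
    HasMellinFinitePart a (fun n ↦ n) (Ring.choose (-s)) (fun t ↦ (1 + t) ^ (-s)) y
      (Gamma (-y) * Gamma (s + y) / Gamma s) := by
  have hval : Gamma (-y) * Gamma (s + y) / Gamma s =
      -s * (Gamma (-(y - 1)) * Gamma (s + 1 + (y - 1)) / Gamma (s + 1)) / y := by
    rw [Gamma_add_one hs.ne', show -(y - 1) = -y + 1 by ring, Gamma_add_one (by linarith)]
    have hΓ : Gamma s ≠ 0 := (Gamma_pos_of_pos hs).ne'
    field_simp
    ring_nf
  rw [hval]
  refine .of_hasDerivAt (f' := fun t ↦ -s * (1 + t) ^ (-(s + 1))) (K := 1) (r := s) ha0 hy0.ne'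
    (by linarith) (fun t ht ↦ ?_) (fun t ht ↦ ?_) (hasSum_one_add_rpow _ ha0.le ha1)
    (fun n hn ↦ absurd hn.symm (hy n)) ?_
  · have ht0 : 0 < 1 + t := by linarith [mem_Ici.1 ht]
    rw [neg_add']
    simpa using ((hasDerivAt_id t).const_add 1).rpow_const (p := -s) (.inl ht0.ne')
  · have ht0 : 0 < t := ha0.trans ht
    rw [norm_of_nonneg (by positivity), one_mul]
    exact rpow_le_rpow_of_nonpos ht0 (by linarith) (by linarith)
  · refine (HasMellinFinitePart.succ_iff (f := fun t ↦ -s * (1 + t) ^ (-(s + 1))) ha0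
      (by norm_num; linarith) (fun t _ ↦ by simp)).1 ?_
    convert h.const_mul (-s) using 1
    · ext n; simp
    · ext n; rw [neg_add']; simpa using succ_mul_choose_succ (-s) n

theorem hasMellinFinitePart_one_add_rpow_neg (ha0 : 0 < a) (ha1 : a < 1) (hs : 0 < s)
    (hsy : 0 < s + y) (hy : ∀ k : ℕ, y ≠ k) :
    HasMellinFinitePart a (fun n ↦ n) (Ring.choose (-s)) (fun t ↦ (1 + t) ^ (-s)) y
      (Gamma (-y) * Gamma (s + y) / Gamma s) := by
  obtain ⟨m, hm⟩ := exists_nat_gt y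
  induction m generalizing s y with
  | zero => exact hasMellinFinitePart_one_add_rpow_neg_of_neg ha0 ha1 hsy (by simpa using hm)
  | succ m ih =>
    obtain hlt | heq | hgt := lt_trichotomy y 0
    · exact hasMellinFinitePart_one_add_rpow_neg_of_neg ha0 ha1 hsy hlt
    · exact absurd heq (by simpa using hy 0)
    · refine hasMellinFinitePart_one_add_rpow_neg_of_sub_one ha0 ha1 hs hgt hy
        (ih (by linarith) (by linarith) (fun k hk ↦ hy (k + 1) ?_) ?_)
      · push_cast; linarith
      · push_cast at hm; linarith

/-- For `y > 0` the leading term `1` of the binomial series has finite part zero, so subtracting it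
changes only the sign. -/
theorem hasMellinFinitePart_one_sub_one_add_rpow_neg (ha0 : 0 < a) (ha1 : a < 1) (hs : 0 < s)
    (hy0 : 0 < y) (hy : ∀ k : ℕ, y ≠ k) :
    HasMellinFinitePart a (fun n ↦ n + 1) (fun n ↦ -Ring.choose (-s) (n + 1))
      (fun t ↦ 1 - (1 + t) ^ (-s)) y (-(Gamma (-y) * Gamma (s + y) / Gamma s)) := by
  have h := (HasMellinFinitePart.succ_iff (f := fun t ↦ (1 + t) ^ (-s) - 1) ha0 (by simpa)
    (fun t _ ↦ by simp)).2 (hasMellinFinitePart_one_add_rpow_neg ha0 ha1 hs (by linarith) hy)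
  simpa using h.const_mul (-1)

end Binomial

section Parseval

variable {a δ x : ℝ} {ν μ e c A B : ℕ → ℝ} {f g : ℝ → ℝ}

lemma image_rpow_neg_Ioo (ha : 0 < a) (hδ : 0 < δ) :
    (fun t : ℝ ↦ t ^ (-δ)) '' Ioo 0 a = Ioi (a ^ (-δ)) := by
  ext v
  refine ⟨fun ⟨t, ht, htv⟩ ↦ htv ▸ rpow_lt_rpow_of_neg ht.1 ht.2 (by linarith), fun hv ↦ ?_⟩
  have hv0 : 0 < v := (rpow_pos_of_pos ha _).trans hv
  refine ⟨v ^ (-δ)⁻¹, ⟨rpow_pos_of_pos hv0 _, ?_⟩, rpow_inv_rpow hv0.le (by linarith)⟩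
  rw [← rpow_rpow_inv ha.le (neg_ne_zero.2 hδ.ne')]
  exact rpow_lt_rpow_of_neg (rpow_pos_of_pos ha _) hv (inv_lt_zero.2 (by linarith))

lemma integrableOn_and_setIntegral_comp_rpow_neg (ha : 0 < a) (hδ : 0 < δ)
    (hg : IntegrableOn (fun v ↦ v ^ (-x - 1) * g v) (Ioi (a ^ (-δ)))) :
    IntegrableOn (fun t ↦ t ^ (x * δ - 1) * g (t ^ (-δ))) (Ioc 0 a) ∧
      ∫ v in Ioi (a ^ (-δ)), v ^ (-x - 1) * g v =
        δ * ∫ t in Ioc 0 a, t ^ (x * δ - 1) * g (t ^ (-δ)) := by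
  have hderiv (t : ℝ) (ht : t ∈ Ioo 0 a) :
      HasDerivWithinAt (fun t ↦ t ^ (-δ)) (-δ * t ^ (-δ - 1)) (Ioo 0 a) t :=
    (hasDerivAt_rpow_const (.inl ht.1.ne')).hasDerivWithinAt
  have hinj : InjOn (fun t : ℝ ↦ t ^ (-δ)) (Ioo 0 a) := fun s hs t ht hst ↦
    (rpow_left_inj hs.1.le ht.1.le (by linarith)).1 hst
  have hjac : EqOn (fun t : ℝ ↦ |-δ * t ^ (-δ - 1)| • ((t ^ (-δ)) ^ (-x - 1) * g (t ^ (-δ))))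
      (fun t ↦ δ * (t ^ (x * δ - 1) * g (t ^ (-δ)))) (Ioo 0 a) := fun t ht ↦ by
    have hpow : t ^ (-δ - 1) * (t ^ (-δ)) ^ (-x - 1) = t ^ (x * δ - 1) := by
      rw [← rpow_mul ht.1.le, ← rpow_add ht.1]; ring_nf
    simp only [← hpow, abs_mul, abs_neg, abs_of_pos hδ, abs_of_nonneg (rpow_nonneg ht.1.le _),
      smul_eq_mul]
    ring
  rw [← image_rpow_neg_Ioo ha hδ] at hg ⊢
  rw [integrableOn_image_iff_integrableOn_abs_deriv_smul measurableSet_Ioo hderiv hinj,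
    integrableOn_congr_fun hjac measurableSet_Ioo] at hg
  rw [integral_image_eq_integral_abs_deriv_smul measurableSet_Ioo hderiv hinj,
    setIntegral_congr_fun measurableSet_Ioo hjac, integral_const_mul, integral_Ioc_eq_integral_Ioo,
    integrableOn_Ioc_iff_integrableOn_Ioo]
  exact ⟨(integrable_const_mul_iff hδ.ne'.isUnit _).1 hg, rfl⟩

lemma integrableOn_and_hasSum_setIntegral_Ioc (ha : 0 < a) (hδ : 0 < δ) (hν : ∀ k, ν 0 ≤ ν k)
    (hf : ∀ t ∈ Ioc 0 a, HasSum (fun k ↦ e k * t ^ ν k) (f t))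
    (hg : IntegrableOn (fun v ↦ v ^ (-((ν 0 + 1) / δ) - 1) * g v) (Ioi (a ^ (-δ)))) :
    IntegrableOn (fun t ↦ f t * g (t ^ (-δ))) (Ioc 0 a) ∧
      HasSum (fun k ↦ e k * ∫ t in Ioc 0 a, t ^ ν k * g (t ^ (-δ)))
        (∫ t in Ioc 0 a, f t * g (t ^ (-δ))) := by
  have hweight := (integrableOn_and_setIntegral_comp_rpow_neg ha hδ hg).1
  rw [div_mul_cancel₀ _ hδ.ne', add_sub_cancel_right] at hweight
  exact integrable_and_hasSum_integral_of_hasSum_rpow ha hν hf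
    (ae_restrict_mem measurableSet_Ioc) aemeasurable_id hweight

lemma integrableOn_and_hasSum_setIntegral_Ioi (ha : 0 < a) (hδ : 0 < δ) (hμ : ∀ n, μ 0 ≤ μ n)
    (hg : ∀ v ∈ Ioc 0 (a ^ (-δ)), HasSum (fun n ↦ c n * v ^ μ n) (g v))
    (hf : IntegrableOn (fun t ↦ t ^ (-(μ 0 * δ - 1) - 1) * f t) (Ioi a)) :
    IntegrableOn (fun t ↦ f t * g (t ^ (-δ))) (Ioi a) ∧
      HasSum (fun n ↦ c n * ∫ t in Ioi a, t ^ (-(μ n * δ - 1) - 1) * f t)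
        (∫ t in Ioi a, f t * g (t ^ (-δ))) := by
  have hpow (p : ℝ) : EqOn (fun t ↦ (t ^ (-δ)) ^ p * f t)
      (fun t ↦ t ^ (-(p * δ - 1) - 1) * f t) (Ioi a) := fun t ht ↦ by
    simp only [← rpow_mul (ha.trans ht).le]; ring_nf
  have hmaps : ∀ t ∈ Ioi a, t ^ (-δ) ∈ Ioc 0 (a ^ (-δ)) := fun t ht ↦
    ⟨rpow_pos_of_pos (ha.trans ht) _, rpow_le_rpow_of_nonpos ha ht.le (by linarith)⟩
  have h := integrable_and_hasSum_integral_of_hasSum_rpow (rpow_pos_of_pos ha _) hμ hg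
    ((ae_restrict_mem measurableSet_Ioi).mono hmaps) (by fun_prop)
    ((integrableOn_congr_fun (hpow _) measurableSet_Ioi).2 hf)
  simp only [setIntegral_congr_fun measurableSet_Ioi (hpow _)] at h
  simpa only [IntegrableOn, mul_comm] using h

lemma HasMellinFinitePart.hasSum_comp_rpow_neg (ha : 0 < a) (hδ : 0 < δ)
    {V : ℝ} (h : HasMellinFinitePart (a ^ (-δ)) μ c g x V) :
    HasSum (fun n ↦ c n * (a ^ (x * δ - μ n * δ) / (x * δ - μ n * δ)))
      ((∫ t in Ioc 0 a, t ^ (x * δ - 1) * g (t ^ (-δ))) - V / δ) := by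
  have hval : (∫ t in Ioc 0 a, t ^ (x * δ - 1) * g (t ^ (-δ))) - V / δ =
      -δ⁻¹ * (V - ∫ v in Ioi (a ^ (-δ)), v ^ (-x - 1) * g v) := by
    rw [(integrableOn_and_setIntegral_comp_rpow_neg ha hδ h.integrableOn).2]
    field_simp
    ring
  rw [hval]
  refine (h.hasSum.mul_left (-δ⁻¹)).congr_fun fun n ↦ ?_
  rw [← rpow_mul ha.le, ← sub_mul, show -δ * (μ n - x) = (x - μ n) * δ by ring,
    ← neg_sub x (μ n)]
  field_simp

theorem summable_and_integral_mul_comp_rpow_neg (ha : 0 < a) (hδ : 0 < δ)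
    (hν : ∀ k, ν 0 ≤ ν k) (hμ : ∀ n, μ 0 ≤ μ n)
    (hf : ∀ t ∈ Ioc 0 a, HasSum (fun k ↦ e k * t ^ ν k) (f t))
    (hg : ∀ v ∈ Ioc 0 (a ^ (-δ)), HasSum (fun n ↦ c n * v ^ μ n) (g v))
    (hA : ∀ n, HasMellinFinitePart a ν e f (μ n * δ - 1) (A n))
    (hB : ∀ k, HasMellinFinitePart (a ^ (-δ)) μ c g ((ν k + 1) / δ) (B k))
    (hsum : Summable fun p : ℕ × ℕ ↦
      c p.1 * e p.2 * (a ^ (ν p.2 + 1 - μ p.1 * δ) / (ν p.2 + 1 - μ p.1 * δ))) :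
    Summable (fun n ↦ c n * A n) ∧ Summable (fun k ↦ e k * B k) ∧
      ∫ t in Ioi 0, f t * g (t ^ (-δ)) = (∑' n, c n * A n) + (∑' k, e k * B k) / δ := by
  obtain ⟨hint_head, hhead⟩ :=
    integrableOn_and_hasSum_setIntegral_Ioc ha hδ hν hf (hB 0).integrableOn
  obtain ⟨hint_tail, htail⟩ :=
    integrableOn_and_hasSum_setIntegral_Ioi ha hδ hμ hg (hA 0).integrableOn
  obtain ⟨S, hS⟩ := hsum
  have hrows : HasSum (fun n ↦ c n * (A n - ∫ t in Ioi a, t ^ (-(μ n * δ - 1) - 1) * f t)) S :=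
    hS.prod_fiberwise fun n ↦ ((hA n).hasSum.mul_left (c n)).congr_fun fun k ↦ by
      simp only [mul_assoc, sub_sub_eq_add_sub]
  have hcols : HasSum (fun k ↦ e k * ((∫ t in Ioc 0 a, t ^ ν k * g (t ^ (-δ))) - B k / δ)) S := by
    refine ((Equiv.prodComm ℕ ℕ).hasSum_iff.2 hS).prod_fiberwise fun k ↦ ?_
    have h := ((hB k).hasSum_comp_rpow_neg ha hδ).mul_left (e k)
    simp only [div_mul_cancel₀ _ hδ.ne', add_sub_cancel_right] at h
    exact h.congr_fun fun n ↦ by simp [mul_left_comm, mul_assoc]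
  have hA_sum : HasSum (fun n ↦ c n * A n) (S + ∫ t in Ioi a, f t * g (t ^ (-δ))) :=
    (hrows.add htail).congr_fun fun n ↦ by ring
  have hB_sum : HasSum (fun k ↦ e k * B k) (δ * ((∫ t in Ioc 0 a, f t * g (t ^ (-δ))) - S)) :=
    ((hhead.sub hcols).mul_left δ).congr_fun fun k ↦ by field_simp; ring
  refine ⟨hA_sum.summable, hB_sum.summable, ?_⟩
  rw [hA_sum.tsum_eq, hB_sum.tsum_eq, mul_div_cancel_left₀ _ hδ.ne',
    ← Ioc_union_Ioi_eq_Ioi ha.le, setIntegral_union (Ioc_disjoint_Ioi le_rfl) measurableSet_Ioi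
      hint_head hint_tail]
  ring

end Parseval

section SmallDivisors

variable {a δ C K ρ : ℝ} {ν μ e c : ℕ → ℝ}

lemma mul_pow_le_abs_sub_mul (hδ : 0 < δ)
    (hdio : ∀ m : ℕ, C * ρ ^ m ≤ |(1 + 2 * m) / δ - round ((1 + 2 * m) / δ)|) (k n : ℕ) :
    δ * C * ρ ^ k ≤ |2 * k + 1 - n * δ| := calc
  δ * C * ρ ^ k ≤ δ * |(1 + 2 * k) / δ - (n : ℤ)| := by
    rw [mul_assoc]
    gcongr
    exact (hdio k).trans (round_le _ _)
  _ = |2 * k + 1 - n * δ| := by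
    rw [← abs_of_pos hδ, ← abs_mul, abs_of_pos hδ, mul_sub, mul_div_cancel₀ _ hδ.ne', add_comm,
      mul_comm δ, Int.cast_natCast]

lemma summable_mul_mul_rpow_div (ha : 0 < a) (hK : 0 < K) (hρ : 0 < ρ)
    (hdist : ∀ n k, K * ρ ^ k ≤ |ν k + 1 - μ n * δ|)
    (hc : Summable fun n ↦ c n * (a ^ (-δ)) ^ μ n)
    (he : Summable fun k ↦ e k * a ^ ν k / ρ ^ k) :
    Summable fun p : ℕ × ℕ ↦
      c p.1 * e p.2 * (a ^ (ν p.2 + 1 - μ p.1 * δ) / (ν p.2 + 1 - μ p.1 * δ)) := by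
  refine ((hc.norm.mul_of_nonneg he.norm (fun _ ↦ norm_nonneg _) fun _ ↦ norm_nonneg _).mul_left
    (a / K)).of_norm_bounded fun ⟨n, k⟩ ↦ ?_
  have hpow : a ^ (ν k + 1 - μ n * δ) = a * a ^ ν k * (a ^ (-δ)) ^ μ n := by
    rw [← rpow_mul ha.le, mul_comm a, ← rpow_add_one ha.ne', ← rpow_add ha]; ring_nf
  simp only [norm_mul, norm_div, hpow, norm_of_nonneg ha.le, norm_of_nonneg (pow_nonneg hρ.le _)]
  calc ‖c n‖ * ‖e k‖ * (a * ‖a ^ ν k‖ * ‖(a ^ (-δ)) ^ μ n‖ / ‖ν k + 1 - μ n * δ‖)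
      ≤ ‖c n‖ * ‖e k‖ * (a * ‖a ^ ν k‖ * ‖(a ^ (-δ)) ^ μ n‖ / (K * ρ ^ k)) := by
        gcongr
        exact hdist n k
    _ = _ := by ring

lemma exp_neg_pow_le_one_add_rpow_neg {τ : ℝ} (hτ : 0 ≤ τ) (m : ℕ) :
    exp (-τ) ^ m ≤ (1 + m : ℝ) ^ (-τ) := by
  have hlog : log (1 + m) ≤ m := by
    linarith [log_le_sub_one_of_pos (by positivity : (0 : ℝ) < 1 + m)]
  rw [← exp_nat_mul, rpow_def_of_pos (by positivity), exp_le_exp]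
  nlinarith

end SmallDivisors

section Dagum

variable {lam δ z t K ρ : ℝ}

lemma dagum_eq_one_sub_one_add_rpow_neg (ht : 0 < t) :
    dagum lam δ t = 1 - (1 + t ^ (-δ)) ^ (-lam) := by
  have hbase : 0 ≤ 1 + t ^ (-δ) := by positivity
  have hinv : t ^ δ / (1 + t ^ δ) = (1 + t ^ (-δ))⁻¹ := by
    rw [rpow_neg ht.le]; field_simp; ring
  rw [dagum, hinv, inv_rpow hbase, ← rpow_neg hbase]

lemma neg_choose_mul_cosMellin_eq (hlam : 0 < lam) (hz : 0 < z) (n : ℕ) :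
    -Ring.choose (-lam) n * (z ^ (n * δ - 1) * cosMellin (n * δ - 1)) =
      -(√π * z⁻¹ / Gamma lam) * dagumTermA lam δ z n := by
  rw [choose_neg_eq_Gamma_div hlam, cosMellin, dagumTermA, rpow_sub_one hz.ne',
    div_rpow hz.le two_pos.le, show -(n * δ - 1) - 1 = -(n * δ) by ring, rpow_neg two_pos.le,
    show -((n * δ - 1) / 2) = (1 - n * δ) / 2 by ring, sub_add_cancel]
  ring

lemma factorial_two_mul_eq (n : ℕ) :
    ((2 * n).factorial : ℝ) = 4 ^ n * n.factorial * Gamma (n + 1 / 2) / √π := by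
  have hdup := Gamma_mul_Gamma_add_half (n + 1 / 2)
  rw [add_assoc, add_halves, Gamma_nat_eq_factorial, show 2 * (n + 1 / 2 : ℝ) = (2 * n : ℕ) + 1 by
    push_cast; ring, Gamma_nat_eq_factorial, sub_add_cancel_right, rpow_neg two_pos.le,
    rpow_natCast, pow_mul] at hdup
  norm_num at hdup
  field_simp at hdup ⊢
  linear_combination -hdup

lemma cos_coeff_mul_Gamma_mul_Gamma_eq (k : ℕ) :
    (-1) ^ k / (2 * k).factorial * z ^ (2 * k : ℝ) *
        -(Gamma (-((2 * k + 1) / δ)) * Gamma (lam + (2 * k + 1) / δ) / Gamma lam) =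
      -(√π / Gamma lam) * dagumTermB lam δ z k := by
  have h4 : (z / 2) ^ (2 * k) = z ^ (2 * k) / 4 ^ k := by
    rw [div_pow, pow_mul 2 2 k]; norm_num
  rw [dagumTermB, factorial_two_mul_eq, h4, add_comm (2 * (k : ℝ))]
  norm_cast
  field_simp
  push_cast
  ring

lemma hasSum_cos_mul_rpow (z t : ℝ) :
    HasSum (fun k : ℕ ↦ (-1) ^ k / (2 * k).factorial * z ^ (2 * k : ℝ) * t ^ (2 * k : ℝ))
      (cos (z * t)) := by
  refine (hasSum_cos_rpow (z * t)).congr_fun fun k ↦ ?_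
  norm_cast
  ring

lemma hasSum_one_sub_one_add_rpow (p : ℝ) (ht0 : 0 ≤ t) (ht1 : t < 1) :
    HasSum (fun n : ℕ ↦ -Ring.choose p (n + 1) * t ^ (n + 1 : ℝ)) (1 - (1 + t) ^ p) := by
  simpa using ((hasSum_nat_add_iff' 1).2 (hasSum_one_add_rpow p ht0 ht1)).neg

lemma summable_cos_coeff_mul_rpow_div_pow (z a : ℝ) (hρ : 0 < ρ) :
    Summable fun k : ℕ ↦
      (-1) ^ k / (2 * k).factorial * z ^ (2 * k : ℝ) * a ^ (2 * k : ℝ) / ρ ^ k := by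
  refine (hasSum_cos_mul_rpow z (a / √ρ)).summable.congr fun k ↦ ?_
  norm_cast
  rw [div_pow, pow_mul √ρ, sq_sqrt hρ.le, mul_div_assoc]

theorem summable_and_integral_cos_mul_dagum (hδ : 1 < δ) (hlam : 0 < lam) (hK : 0 < K)
    (hρ : 0 < ρ) (hdist : ∀ k n : ℕ, K * ρ ^ k ≤ |2 * k + 1 - n * δ|) (hz : 0 < z) :
    Summable (fun n ↦ dagumTermA lam δ z (n + 1)) ∧ Summable (dagumTermB lam δ z) ∧
      ∫ t in Ioi 0, cos (z * t) * dagum lam δ t =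
        -(√π * z⁻¹ / Gamma lam) * (∑' n, dagumTermA lam δ z (n + 1)) +
          -(√π / Gamma lam) * (∑' k, dagumTermB lam δ z k) / δ := by
  have hδ0 : 0 < δ := by linarith
  have hne (k n : ℕ) : 2 * k + 1 - n * δ ≠ 0 :=
    abs_pos.1 ((by positivity : 0 < K * ρ ^ k).trans_le (hdist k n))
  have hcut : (2 : ℝ) ^ (-δ) < 1 := rpow_lt_one_of_one_lt_of_neg one_lt_two (by linarith)
  have hg (v : ℝ) (hv : v ∈ Ioc 0 ((2 : ℝ) ^ (-δ))) :=
    hasSum_one_sub_one_add_rpow (-lam) hv.1.le (hv.2.trans_lt hcut)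
  have hA (n : ℕ) := HasMellinFinitePart.comp_mul_left (a := 2) hz two_pos
    (hasMellinFinitePart_cos (y := (n + 1) * δ - 1) (by positivity)
      (by nlinarith [n.cast_nonneg (α := ℝ)]) fun k hk ↦ hne k (n + 1) (by push_cast; linarith))
  have hB (k : ℕ) := hasMellinFinitePart_one_sub_one_add_rpow_neg (y := (2 * k + 1) / δ)
    (rpow_pos_of_pos two_pos (-δ)) hcut hlam (by positivity)
    fun n hn ↦ hne k n (sub_eq_zero.2 ((div_eq_iff hδ0.ne').1 hn))
  have hsum := summable_mul_mul_rpow_div two_pos hK hρ (μ := fun n ↦ n + 1)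
    (fun n k ↦ by simpa using hdist k (n + 1)) (hg _ ⟨by positivity, le_rfl⟩).summable
    (summable_cos_coeff_mul_rpow_div_pow z 2 hρ)
  have h := summable_and_integral_mul_comp_rpow_neg two_pos hδ0 (by simp) (by simp)
    (fun t _ ↦ hasSum_cos_mul_rpow z t) hg hA hB hsum
  have htermA (n : ℕ) := neg_choose_mul_cosMellin_eq (δ := δ) hlam hz (n + 1)
  push_cast at htermA
  have hcA : -(√π * z⁻¹ / Gamma lam) ≠ 0 := neg_ne_zero.2 (by positivity)
  have hcB : -(√π / Gamma lam) ≠ 0 := neg_ne_zero.2 (by positivity)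
  simp only [htermA, cos_coeff_mul_Gamma_mul_Gamma_eq, summable_mul_left_iff hcA,
    summable_mul_left_iff hcB, tsum_mul_left] at h
  rwa [← setIntegral_congr_fun measurableSet_Ioi fun t ht ↦
    congrArg (cos (z * t) * ·) (dagum_eq_one_sub_one_add_rpow_neg ht)] at h

end Dagum

theorem dagum_spectral_density_series_general {δ lam C ρ z : ℝ} (hδ : 1 < δ) (hlam : 0 < lam)
    (hC : 0 < C) (hρ : 0 < ρ)
    (hdio : ∀ m : ℕ, C * ρ ^ m ≤ |(1 + 2 * m) / δ - round ((1 + 2 * m) / δ)|) (hz : 0 < z) :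
    Summable (fun n ↦ |dagumTermA lam δ z (n + 1)|) ∧ Summable (fun n ↦ |dagumTermB lam δ z n|) ∧
      1 / π * ∫ t in Ioi 0, cos (z * t) * dagum lam δ t =
        -(z⁻¹ / (√π * Gamma lam)) * (∑' n, dagumTermA lam δ z (n + 1)) -
          1 / (√π * Gamma lam * δ) * ∑' n, dagumTermB lam δ z n := by
  have hδ0 : 0 < δ := by linarith
  obtain ⟨hA, hB, hint⟩ := summable_and_integral_cos_mul_dagum hδ hlam (mul_pos hδ0 hC) hρ
    (mul_pow_le_abs_sub_mul hδ0 hdio) hz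
  refine ⟨hA.abs, hB.abs, ?_⟩
  have hπ : 1 / π = 1 / √π ^ 2 := by rw [sq_sqrt pi_pos.le]
  rw [hint, hπ]
  field_simp
  ring

/-- Fox–Wright series expansion of the one-dimensional Dagum spectral density: for
`δ ∈ (1,2)`, `λ > 0`, `δλ ∈ (0,2)`, assuming a Diophantine condition keeping
`(1+2m)/δ` uniformly away from the integers, for every `z > 0` both series converge
absolutely and
`(1/π) ∫₀^∞ cos(zt) D_{λ,δ}(t) dt
  = -(z⁻¹/(√π Γ(λ))) Σ_{n≥1} (-1)^n Γ(λ+n)Γ((1-nδ)/2)/(n! Γ(nδ/2)) (z/2)^{nδ}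
    - (1/(√π Γ(λ) δ)) Σ_{n≥0} (-1)^n Γ(λ+(1+2n)/δ)Γ(-(1+2n)/δ)/(n! Γ(n+1/2)) (z/2)^{2n}`. -/
theorem dagum_spectral_density_series (δ lam : ℝ) (hδ1 : 1 < δ) (hδ2 : δ < 2)
    (hlam : 0 < lam) (hdl0 : 0 < δ * lam) (hdl2 : δ * lam < 2)
    (C τ : ℝ) (hC : 0 < C) (hτ : 0 < τ)
    (hdio : ∀ m : ℕ, C * (1 + (m : ℝ)) ^ (-τ)
      ≤ |(1 + 2 * (m : ℝ)) / δ - round ((1 + 2 * (m : ℝ)) / δ)|)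
    (z : ℝ) (hz : 0 < z) :
    Summable (fun n : ℕ => |dagumTermA lam δ z (n + 1)|) ∧
    Summable (fun n : ℕ => |dagumTermB lam δ z n|) ∧
    (1 / Real.pi) * ∫ t in Ioi (0 : ℝ), Real.cos (z * t) * dagum lam δ t
      = -(z⁻¹ / (Real.sqrt Real.pi * Real.Gamma lam)) * (∑' n : ℕ, dagumTermA lam δ z (n + 1))
        - (1 / (Real.sqrt Real.pi * Real.Gamma lam * δ)) * (∑' n : ℕ, dagumTermB lam δ z n) :=
  dagum_spectral_density_series_general hδ1 hlam hC (Real.exp_pos (-τ)) (fun m ↦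
    (mul_le_mul_of_nonneg_left (exp_neg_pow_le_one_add_rpow_neg hτ.le m) hC.le).trans (hdio m)) hz
end

section
/- Let d = 1, δ ∈ (0,1), λ > 0 with δλ ∈ (0,2]. Then for every z > 0 the improper integral \widehat{D}(z) = (1/π) lim_{T→∞} ∫₀^T cos(z t) D_{λ,δ}(t) dt exists, and z^{1−δ} \widehat{D}(z) → 2^{−δ} λ Γ((1−δ)/2) / ( √π Γ(δ/2) ) as z → 0⁺. -/
open MeasureTheory Set Filter intervalIntegral

/-!
One integration by parts turns the improper cosine integral of `D = dagum lam δ` into the absolutely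
convergent `z⁻¹ ∫ sin (z t) (-D' t) dt`. The function `t ^ (1 + δ) * (-D' t)` is bounded and tends
to `δ λ` at infinity, so after the substitution `s = z t` dominated convergence gives
`z ^ (1 - δ) * z⁻¹ * ∫ sin (z t) (-D' t) dt → δ λ ∫ sin s * s ^ (-1 - δ) ds`.

The last integral is computed from the identity `Γ(a) s ^ (-a) = ∫ x ^ (a - 1) e ^ (-s x) dx`, which
moves the power onto the Laplace transform `1 / (1 + x ^ 2)` of the sine; the same identity, applied
to `e ^ (-s)`, evaluates the resulting beta integral.
-/

section

open Real
open scoped Topology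

theorem integral_rpow_sub_one_mul_exp_neg_mul_Ioi {a s : ℝ} (ha : 0 < a) (hs : 0 < s) :
    ∫ x in Ioi (0 : ℝ), x ^ (a - 1) * exp (-(s * x)) = Gamma a * s ^ (-a) := by
  rw [integral_rpow_mul_exp_neg_mul_Ioi ha hs, one_div, inv_rpow hs.le, ← rpow_neg hs.le, mul_comm]

theorem integrableOn_rpow_sub_one_mul_exp_neg_mul_Ioi {a s : ℝ} (ha : 0 < a) (hs : 0 < s) :
    IntegrableOn (fun x ↦ x ^ (a - 1) * exp (-(s * x))) (Ioi 0) := by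
  simpa only [rpow_one, neg_mul] using
    integrableOn_rpow_mul_exp_neg_mul_rpow (p := 1) (s := a - 1) (by linarith) one_pos hs

theorem integrable_prod_mul_rpow_sub_one_mul_exp_neg_mul {φ : ℝ → ℝ} {a : ℝ} (ha : 0 < a)
    (hφ : IntegrableOn (fun s ↦ φ s * s ^ (-a)) (Ioi 0)) :
    Integrable (fun q : ℝ × ℝ ↦ φ q.1 * (q.2 ^ (a - 1) * exp (-(q.1 * q.2))))
      ((volume.restrict (Ioi 0)).prod (volume.restrict (Ioi 0))) := by
  have hφ_meas : AEStronglyMeasurable φ (volume.restrict (Ioi 0)) := by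
    have h : AEStronglyMeasurable (fun s : ℝ ↦ s ^ a) (volume.restrict (Ioi 0)) := by fun_prop
    refine (hφ.aestronglyMeasurable.mul h).congr ?_
    filter_upwards [ae_restrict_mem measurableSet_Ioi] with s (hs : 0 < s)
    simp only [Pi.mul_apply]
    rw [mul_assoc, ← rpow_add hs, neg_add_cancel, rpow_zero, mul_one]
  have hkernel_meas : Measurable fun q : ℝ × ℝ ↦ q.2 ^ (a - 1) * exp (-(q.1 * q.2)) := by fun_prop
  refine (integrable_prod_iff (hφ_meas.comp_fst.mul hkernel_meas.aestronglyMeasurable)).2 ⟨?_, ?_⟩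
  · filter_upwards [ae_restrict_mem measurableSet_Ioi] with s hs
    exact (integrableOn_rpow_sub_one_mul_exp_neg_mul_Ioi ha hs).const_mul (φ s)
  · refine (hφ.norm.const_mul (Gamma a)).congr ?_
    filter_upwards [ae_restrict_mem measurableSet_Ioi] with s (hs : 0 < s)
    have hnorm : ∀ x ∈ Ioi (0 : ℝ), ‖φ s * (x ^ (a - 1) * exp (-(s * x)))‖ =
        ‖φ s‖ * (x ^ (a - 1) * exp (-(s * x))) := fun x (hx : 0 < x) ↦ by
      rw [norm_mul, norm_of_nonneg (by positivity : 0 ≤ x ^ (a - 1) * exp (-(s * x)))]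
    simp only [Pi.mul_apply]
    rw [setIntegral_congr_fun measurableSet_Ioi hnorm, MeasureTheory.integral_const_mul,
      integral_rpow_sub_one_mul_exp_neg_mul_Ioi ha hs, norm_mul,
      norm_of_nonneg (rpow_nonneg hs.le (-a))]
    ring

theorem Gamma_mul_integral_mul_rpow_neg {φ : ℝ → ℝ} {a : ℝ} (ha : 0 < a)
    (hφ : IntegrableOn (fun s ↦ φ s * s ^ (-a)) (Ioi 0)) :
    Gamma a * ∫ s in Ioi (0 : ℝ), φ s * s ^ (-a) =
      ∫ x in Ioi (0 : ℝ), x ^ (a - 1) * ∫ s in Ioi (0 : ℝ), φ s * exp (-(s * x)) := by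
  calc Gamma a * ∫ s in Ioi (0 : ℝ), φ s * s ^ (-a)
      = ∫ s in Ioi (0 : ℝ), ∫ x in Ioi (0 : ℝ), φ s * (x ^ (a - 1) * exp (-(s * x))) := by
        rw [← MeasureTheory.integral_const_mul]
        refine setIntegral_congr_fun measurableSet_Ioi fun s hs ↦ ?_
        simp only [MeasureTheory.integral_const_mul]
        rw [integral_rpow_sub_one_mul_exp_neg_mul_Ioi ha hs, mul_left_comm]
    _ = ∫ x in Ioi (0 : ℝ), ∫ s in Ioi (0 : ℝ), φ s * (x ^ (a - 1) * exp (-(s * x))) :=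
        integral_integral_swap (integrable_prod_mul_rpow_sub_one_mul_exp_neg_mul ha hφ)
    _ = _ := by simp only [mul_left_comm (φ _), MeasureTheory.integral_const_mul]

theorem integral_rpow_sub_one_mul_inv_one_add {a : ℝ} (ha0 : 0 < a) (ha1 : a < 1) :
    ∫ x in Ioi (0 : ℝ), x ^ (a - 1) * (1 + x)⁻¹ = Gamma a * Gamma (1 - a) := by
  have hexp : IntegrableOn (fun s : ℝ ↦ exp (-s) * s ^ (-a)) (Ioi 0) := by
    simpa only [sub_sub_cancel_left] using GammaIntegral_convergent (s := 1 - a) (by linarith)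
  have hlaplace : ∀ x ∈ Ioi (0 : ℝ), ∫ s in Ioi (0 : ℝ), exp (-s) * exp (-(s * x)) = (1 + x)⁻¹ := by
    intro x (hx : 0 < x)
    have h := integral_exp_mul_Ioi (a := -(1 + x)) (by linarith) 0
    rw [mul_zero, exp_zero, neg_div_neg_eq, one_div] at h
    rw [← h]
    congr 1 with s
    rw [← exp_add]
    ring_nf
  have h := Gamma_mul_integral_mul_rpow_neg ha0 hexp
  rw [setIntegral_congr_fun measurableSet_Ioi fun x hx ↦ congrArg (x ^ (a - 1) * ·) (hlaplace x hx)]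
    at h
  rw [← h, Gamma_eq_integral (by linarith : 0 < 1 - a), sub_sub_cancel_left]

theorem integral_rpow_mul_inv_one_add_rpow {p q : ℝ} (hq : -1 < q) (hqp : q + 1 < p) :
    ∫ x in Ioi (0 : ℝ), x ^ q * (1 + x ^ p)⁻¹ =
      p⁻¹ * (Gamma ((q + 1) / p) * Gamma (1 - (q + 1) / p)) := by
  have hp : 0 < p := by linarith
  rw [← integral_rpow_sub_one_mul_inv_one_add (div_pos (by linarith) hp) ((div_lt_one hp).2 hqp),
    ← integral_comp_rpow_Ioi_of_pos (g := fun x ↦ x ^ ((q + 1) / p - 1) * (1 + x)⁻¹) hp,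
    ← MeasureTheory.integral_const_mul]
  refine setIntegral_congr_fun measurableSet_Ioi fun x (hx : 0 < x) ↦ ?_
  have hpow : x ^ q = x ^ (p - 1) * (x ^ p) ^ ((q + 1) / p - 1) := by
    rw [← rpow_mul hx.le, ← rpow_add hx]
    congr 1
    field_simp
    ring
  simp only [smul_eq_mul]
  rw [hpow]
  field_simp

theorem integral_sin_mul_exp_neg_mul_Ioi (b : ℝ) {x : ℝ} (hx : 0 < x) :
    ∫ s in Ioi (0 : ℝ), sin (b * s) * exp (-(s * x)) = b / (x ^ 2 + b ^ 2) := by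
  have hre : (-x + b * Complex.I : ℂ).re < 0 := by simpa using hx
  have him : ∀ s : ℝ, sin (b * s) * exp (-(s * x)) =
      (Complex.exp ((-x + b * Complex.I) * s)).im := fun s ↦ by
    simp [Complex.exp_im, mul_comm]
  simp only [him]
  have h := integral_im (integrableOn_exp_mul_complex_Ioi hre 0)
  simp only [RCLike.im_eq_complex_im] at h
  rw [h, integral_exp_mul_complex_Ioi hre]
  simp [Complex.normSq_apply, sq, neg_div]

theorem integrableOn_sin_mul_rpow {p : ℝ} (hp₂ : -2 < p) (hp₁ : p < -1) :
    IntegrableOn (fun s ↦ sin s * s ^ p) (Ioi 0) := by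
  have hmeas (S : Set ℝ) :
      AEStronglyMeasurable (fun s : ℝ ↦ sin s * s ^ p) (volume.restrict S) := by fun_prop
  rw [← Ioc_union_Ioi_eq_Ioi zero_le_one]
  refine IntegrableOn.union ?_ ?_
  · have hdom : IntegrableOn (fun s : ℝ ↦ s ^ (1 + p)) (Ioc 0 1) :=
      (intervalIntegrable_iff_integrableOn_Ioc_of_le zero_le_one).1
        (intervalIntegrable_rpow' (by linarith))
    refine hdom.mono' (hmeas _) ?_
    filter_upwards [ae_restrict_mem measurableSet_Ioc] with s ⟨hs, _⟩
    rw [norm_mul, norm_of_nonneg (rpow_nonneg hs.le p), rpow_add hs, rpow_one]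
    gcongr
    exact abs_sin_le_abs.trans_eq (abs_of_pos hs)
  · refine (integrableOn_Ioi_rpow_of_lt hp₁ one_pos).mono' (hmeas _) ?_
    filter_upwards [ae_restrict_mem measurableSet_Ioi] with s (hs : 1 < s)
    have hpow : 0 ≤ s ^ p := by positivity
    rw [norm_mul, norm_of_nonneg hpow]
    exact mul_le_of_le_one_left hpow (abs_sin_le_one s)

theorem Gamma_mul_integral_sin_mul_rpow {δ : ℝ} (hδ0 : 0 < δ) (hδ1 : δ < 1) :
    Gamma (δ + 1) * ∫ s in Ioi (0 : ℝ), sin s * s ^ (-1 - δ) =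
      1 / 2 * Gamma ((δ + 1) / 2) * Gamma ((1 - δ) / 2) := by
  have hlaplace : ∀ x ∈ Ioi (0 : ℝ), x ^ (δ + 1 - 1) * ∫ s in Ioi (0 : ℝ), sin s * exp (-(s * x)) =
      x ^ δ * (1 + x ^ (2 : ℝ))⁻¹ := fun x hx ↦ by
    have h := integral_sin_mul_exp_neg_mul_Ioi 1 hx
    simp only [one_mul, one_pow, one_div] at h
    rw [h, add_sub_cancel_right, rpow_two, add_comm]
  have h := Gamma_mul_integral_mul_rpow_neg (φ := sin) (a := δ + 1) (by linarith)
    (integrableOn_sin_mul_rpow (by linarith) (by linarith))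
  rw [setIntegral_congr_fun measurableSet_Ioi hlaplace,
    integral_rpow_mul_inv_one_add_rpow (by linarith) (by linarith)] at h
  rw [show -1 - δ = -(δ + 1) by ring, h, show 1 - (δ + 1) / 2 = (1 - δ) / 2 by ring]
  ring

theorem integral_sin_mul_rpow {δ : ℝ} (hδ0 : 0 < δ) (hδ1 : δ < 1) :
    ∫ s in Ioi (0 : ℝ), sin s * s ^ (-1 - δ) =
      2 ^ (-δ) * √π * Gamma ((1 - δ) / 2) / (δ * Gamma (δ / 2)) := by
  have hGδ : 0 < Gamma δ := Gamma_pos_of_pos hδ0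
  have hGhalf : 0 < Gamma (δ / 2) := Gamma_pos_of_pos (half_pos hδ0)
  have hsin := Gamma_mul_integral_sin_mul_rpow hδ0 hδ1
  rw [Gamma_add_one hδ0.ne'] at hsin
  have hdup := Gamma_mul_Gamma_add_half (δ / 2)
  rw [show 2 * (δ / 2) = δ by ring, show δ / 2 + 1 / 2 = (δ + 1) / 2 by ring,
    show 1 - δ = -δ + 1 by ring, rpow_add_one two_ne_zero] at hdup
  rw [eq_div_iff (mul_pos hδ0 hGhalf).ne']
  apply mul_left_cancel₀ hGδ.ne'
  linear_combination Gamma (δ / 2) * hsin + Gamma ((1 - δ) / 2) / 2 * hdup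

theorem integral_cos_mul_eq_of_hasDerivAt {f g : ℝ → ℝ} {z T : ℝ} (hz : z ≠ 0) (hT : 0 ≤ T)
    (hf : ContinuousOn f (Icc 0 T)) (hfg : ∀ t ∈ Ioo 0 T, HasDerivAt f (-g t) t)
    (hg : IntervalIntegrable g volume 0 T) :
    ∫ t in (0 : ℝ)..T, cos (z * t) * f t =
      z⁻¹ * (sin (z * T) * f T) + z⁻¹ * ∫ t in (0 : ℝ)..T, sin (z * t) * g t := by
  have hsin (t : ℝ) : HasDerivAt (fun t ↦ z⁻¹ * sin (z * t)) (cos (z * t)) t := by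
    refine (((hasDerivAt_id t).const_mul z).sin.const_mul z⁻¹).congr_deriv ?_
    simp only [id, mul_one]
    field_simp
  have hcos : Continuous fun t ↦ cos (z * t) := by fun_prop
  have h := integral_mul_deriv_eq_deriv_mul_of_hasDerivAt (a := 0) (b := T)
    (by rwa [uIcc_of_le hT]) (by fun_prop) (by rwa [min_eq_left hT, max_eq_right hT])
    (fun t _ ↦ hsin t) hg.neg (hcos.intervalIntegrable 0 T)
  simp only [mul_comm (cos _), h, mul_zero, sin_zero, sub_zero, Pi.neg_apply]
  have hneg (t : ℝ) : -g t * (z⁻¹ * sin (z * t)) = -z⁻¹ * (sin (z * t) * g t) := by ring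
  simp only [hneg, intervalIntegral.integral_const_mul]
  ring

theorem tendsto_integral_cos_mul_of_hasDerivAt {f g : ℝ → ℝ} {z : ℝ} (hz : z ≠ 0)
    (hf : ContinuousOn f (Ici 0)) (hfg : ∀ t ∈ Ioi 0, HasDerivAt f (-g t) t)
    (hg : IntegrableOn g (Ioi 0)) (hf_lim : Tendsto f atTop (𝓝 0)) :
    Tendsto (fun T ↦ ∫ t in (0 : ℝ)..T, cos (z * t) * f t) atTop
      (𝓝 (z⁻¹ * ∫ t in Ioi (0 : ℝ), sin (z * t) * g t)) := by
  have hsg : IntegrableOn (fun t ↦ sin (z * t) * g t) (Ioi 0) :=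
    hg.bdd_mul (c := 1) (by fun_prop) (ae_of_all _ fun t ↦ abs_sin_le_one _)
  have hboundary : Tendsto (fun T ↦ sin (z * T) * f T) atTop (𝓝 0) :=
    isBoundedUnder_le_mul_tendsto_zero
      (isBoundedUnder_of ⟨1, fun T ↦ abs_sin_le_one (z * T)⟩) hf_lim
  have hlim := (hboundary.const_mul z⁻¹).add
    ((intervalIntegral_tendsto_integral_Ioi 0 hsg tendsto_id).const_mul z⁻¹)
  rw [mul_zero, zero_add] at hlim
  refine hlim.congr' ?_
  filter_upwards [eventually_ge_atTop 0] with T hT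
  exact (integral_cos_mul_eq_of_hasDerivAt hz hT (hf.mono Icc_subset_Ici_self)
    (fun t ht ↦ hfg t ht.1)
    ((intervalIntegrable_iff_integrableOn_Ioc_of_le hT).2 (hg.mono_set Ioc_subset_Ioi_self))).symm

theorem rpow_mul_integral_comp_mul_left_Ioi (φ h : ℝ → ℝ) (p : ℝ) {z : ℝ} (hz : 0 < z) :
    z ^ (p + 1) * ∫ t in Ioi (0 : ℝ), φ (z * t) * (t ^ p * h t) =
      ∫ s in Ioi (0 : ℝ), φ s * s ^ p * h (s / z) := by
  have hsubst := integral_comp_mul_left_Ioi' (fun s ↦ φ s * s ^ p * h (s / z)) 0 hz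
  rw [mul_zero] at hsubst
  rw [← hsubst, rpow_add_one hz.ne', mul_comm (z ^ p), mul_assoc, smul_eq_mul,
    ← MeasureTheory.integral_const_mul]
  congr 1
  refine setIntegral_congr_fun measurableSet_Ioi fun t (ht : 0 < t) ↦ ?_
  simp only [mul_div_cancel_left₀ t hz.ne', mul_rpow hz.le ht.le]
  ring

theorem tendsto_integral_mul_comp_div {K h : ℝ → ℝ} {C c : ℝ} (hK : IntegrableOn K (Ioi 0))
    (hh : Measurable h) (hC : ∀ t, 0 < t → |h t| ≤ C) (hc : Tendsto h atTop (𝓝 c)) :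
    Tendsto (fun z ↦ ∫ s in Ioi (0 : ℝ), K s * h (s / z)) (𝓝[>] 0)
      (𝓝 (∫ s in Ioi (0 : ℝ), K s * c)) := by
  refine tendsto_integral_filter_of_dominated_convergence (fun s ↦ ‖K s‖ * C) ?_ ?_
    (hK.norm.mul_const C) ?_
  · exact Eventually.of_forall fun z ↦
      hK.aestronglyMeasurable.mul (hh.comp (measurable_id.div_const z)).aestronglyMeasurable
  · filter_upwards [self_mem_nhdsWithin] with z hz
    filter_upwards [ae_restrict_mem measurableSet_Ioi] with s hs
    rw [norm_mul]
    gcongr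
    exact hC _ (div_pos hs hz)
  · filter_upwards [ae_restrict_mem measurableSet_Ioi] with s hs
    have hdiv : Tendsto (fun z : ℝ ↦ s / z) (𝓝[>] 0) atTop :=
      tendsto_inv_nhdsGT_zero.const_mul_atTop hs
    exact (hc.comp hdiv).const_mul (K s)

/-- The distribution function of the log-logistic law with shape `δ` and scale `1`. The Dagum
function is `1 - logLogisticCDF δ ^ lam`. Only arguments `0 ≤ t` are meaningful. -/
noncomputable def logLogisticCDF (δ t : ℝ) : ℝ := t ^ δ / (1 + t ^ δ)

namespace logLogisticCDF

theorem nonneg (δ : ℝ) {t : ℝ} (ht : 0 ≤ t) : 0 ≤ logLogisticCDF δ t := by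
  unfold logLogisticCDF
  positivity

theorem pos (δ : ℝ) {t : ℝ} (ht : 0 < t) : 0 < logLogisticCDF δ t := by
  unfold logLogisticCDF
  positivity

theorem le_one (δ : ℝ) {t : ℝ} (ht : 0 ≤ t) : logLogisticCDF δ t ≤ 1 :=
  div_le_one_of_le₀ (by linarith) (by positivity)

theorem measurable (δ : ℝ) : Measurable (logLogisticCDF δ) := by
  unfold logLogisticCDF
  fun_prop

theorem continuousOn {δ : ℝ} (hδ : 0 ≤ δ) : ContinuousOn (logLogisticCDF δ) (Ici 0) := by
  have hpow : Continuous fun t : ℝ ↦ t ^ δ := continuous_rpow_const hδ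
  refine hpow.continuousOn.div (hpow.const_add 1).continuousOn fun t (ht : 0 ≤ t) ↦ ?_
  positivity

theorem tendsto_atTop {δ : ℝ} (hδ : 0 < δ) : Tendsto (logLogisticCDF δ) atTop (𝓝 1) := by
  have h : Tendsto (fun t : ℝ ↦ 1 - (1 + t ^ δ)⁻¹) atTop (𝓝 (1 - 0)) :=
    (tendsto_inv_atTop_zero.comp
      (tendsto_atTop_add_const_left _ 1 (tendsto_rpow_atTop hδ))).const_sub 1
  rw [sub_zero] at h
  refine h.congr' ?_
  filter_upwards [eventually_ge_atTop 0] with t ht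
  have hne : 1 + t ^ δ ≠ 0 := by positivity
  rw [logLogisticCDF, eq_div_iff hne, sub_mul, one_mul, inv_mul_cancel₀ hne, add_sub_cancel_left]

theorem hasDerivAt (δ : ℝ) {t : ℝ} (ht : 0 < t) :
    HasDerivAt (logLogisticCDF δ) (δ * t ^ (-1 - δ) * logLogisticCDF δ t ^ 2) t := by
  have hpow : HasDerivAt (fun t : ℝ ↦ t ^ δ) (δ * t ^ (δ - 1)) t :=
    hasDerivAt_rpow_const (Or.inl ht.ne')
  refine (hpow.div (hpow.const_add 1) (by positivity)).congr_deriv ?_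
  rw [logLogisticCDF, show -1 - δ = δ - 1 - δ - δ by ring, rpow_sub ht _ δ, rpow_sub ht _ δ]
  field_simp
  ring

end logLogisticCDF

/-- The factor `-t ^ (1 + δ) * (dagum lam δ)' t` left when the decay `t ^ (-1 - δ)` is divided out
of the derivative of the Dagum function. -/
noncomputable def dagumDerivFactor (lam δ t : ℝ) : ℝ := δ * lam * logLogisticCDF δ t ^ (lam + 1)

section dagum

variable {lam δ : ℝ}

theorem hasDerivAt_dagum (lam δ : ℝ) {t : ℝ} (ht : 0 < t) :
    HasDerivAt (dagum lam δ) (-(t ^ (-1 - δ) * dagumDerivFactor lam δ t)) t := by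
  have hpos := logLogisticCDF.pos δ ht
  refine (((logLogisticCDF.hasDerivAt δ ht).rpow_const (p := lam)
    (Or.inl hpos.ne')).const_sub 1).congr_deriv ?_
  rw [dagumDerivFactor, show lam + 1 = 2 + (lam - 1) by ring, rpow_add hpos, rpow_two]
  ring

theorem continuousOn_dagum (hδ : 0 ≤ δ) (hlam : 0 ≤ lam) : ContinuousOn (dagum lam δ) (Ici 0) :=
  continuousOn_const.sub ((logLogisticCDF.continuousOn hδ).rpow_const fun _ _ ↦ Or.inr hlam)

theorem tendsto_dagum_atTop (lam : ℝ) (hδ : 0 < δ) : Tendsto (dagum lam δ) atTop (𝓝 0) := by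
  have h := ((logLogisticCDF.tendsto_atTop hδ).rpow_const (p := lam)
    (Or.inl one_ne_zero)).const_sub 1
  rwa [one_rpow, sub_self] at h

theorem measurable_dagumDerivFactor (lam δ : ℝ) : Measurable (dagumDerivFactor lam δ) :=
  ((logLogisticCDF.measurable δ).pow_const (lam + 1)).const_mul (δ * lam)

theorem tendsto_dagumDerivFactor_atTop (lam : ℝ) (hδ : 0 < δ) :
    Tendsto (dagumDerivFactor lam δ) atTop (𝓝 (δ * lam)) := by
  have h := ((logLogisticCDF.tendsto_atTop hδ).rpow_const (p := lam + 1)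
    (Or.inl one_ne_zero)).const_mul (δ * lam)
  rwa [one_rpow, mul_one] at h

theorem abs_dagumDerivFactor_le (δ : ℝ) {t : ℝ} (hlam : -1 ≤ lam) (ht : 0 ≤ t) :
    |dagumDerivFactor lam δ t| ≤ |δ * lam| := by
  have hw := logLogisticCDF.nonneg δ ht
  rw [dagumDerivFactor, abs_mul, abs_of_nonneg (rpow_nonneg hw (lam + 1))]
  exact mul_le_of_le_one_right (abs_nonneg _)
    (rpow_le_one hw (logLogisticCDF.le_one δ ht) (by linarith))

theorem integrableOn_rpow_mul_dagumDerivFactor (hδ : 0 < δ) (hlam : 0 ≤ lam) :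
    IntegrableOn (fun t ↦ t ^ (-1 - δ) * dagumDerivFactor lam δ t) (Ioi 0) := by
  refine integrable_neg_iff.1 (integrableOn_Ioi_deriv_of_nonpos
    (continuousOn_dagum hδ.le hlam 0 self_mem_Ici) (fun t ht ↦ hasDerivAt_dagum lam δ ht)
    (fun t (ht : 0 < t) ↦ ?_) (tendsto_dagum_atTop lam hδ))
  have hw := logLogisticCDF.pos δ ht
  unfold dagumDerivFactor
  exact neg_nonpos.2 (by positivity)

/-- The isotropic spectral density of the Dagum function in dimension one, written as the absolutely
convergent integral produced by integrating the improper cosine integral by parts. -/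
noncomputable def dagumSpectralDensity (lam δ z : ℝ) : ℝ :=
  1 / π * (z⁻¹ * ∫ t in Ioi (0 : ℝ), sin (z * t) * (t ^ (-1 - δ) * dagumDerivFactor lam δ t))

theorem tendsto_integral_cos_mul_dagum {z : ℝ} (hδ : 0 < δ) (hlam : 0 ≤ lam) (hz : z ≠ 0) :
    Tendsto (fun T : ℝ ↦ 1 / π * ∫ t in (0 : ℝ)..T, cos (z * t) * dagum lam δ t) atTop
      (𝓝 (dagumSpectralDensity lam δ z)) :=
  (tendsto_integral_cos_mul_of_hasDerivAt hz (continuousOn_dagum hδ.le hlam)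
    (fun _ ht ↦ hasDerivAt_dagum lam δ ht) (integrableOn_rpow_mul_dagumDerivFactor hδ hlam)
    (tendsto_dagum_atTop lam hδ)).const_mul (1 / π)

theorem rpow_mul_dagumSpectralDensity (lam δ : ℝ) {z : ℝ} (hz : 0 < z) :
    z ^ (1 - δ) * dagumSpectralDensity lam δ z =
      1 / π * ∫ s in Ioi (0 : ℝ), sin s * s ^ (-1 - δ) * dagumDerivFactor lam δ (s / z) := by
  rw [← rpow_mul_integral_comp_mul_left_Ioi sin _ _ hz, dagumSpectralDensity,
    show -1 - δ + 1 = 1 - δ - 1 by ring, rpow_sub_one hz.ne']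
  ring

theorem tendsto_rpow_mul_dagumSpectralDensity (hδ0 : 0 < δ) (hδ1 : δ < 1) (hlam : -1 ≤ lam) :
    Tendsto (fun z ↦ z ^ (1 - δ) * dagumSpectralDensity lam δ z) (𝓝[>] 0)
      (𝓝 (2 ^ (-δ) * lam * Gamma ((1 - δ) / 2) / (√π * Gamma (δ / 2)))) := by
  have hlim := (tendsto_integral_mul_comp_div
    (integrableOn_sin_mul_rpow (p := -1 - δ) (by linarith) (by linarith))
    (measurable_dagumDerivFactor lam δ) (fun t ht ↦ abs_dagumDerivFactor_le δ hlam ht.le)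
    (tendsto_dagumDerivFactor_atTop lam hδ0)).const_mul (1 / π)
  have hconst : 1 / π * ∫ s in Ioi (0 : ℝ), sin s * s ^ (-1 - δ) * (δ * lam) =
      2 ^ (-δ) * lam * Gamma ((1 - δ) / 2) / (√π * Gamma (δ / 2)) := by
    have hG : Gamma (δ / 2) ≠ 0 := (Gamma_pos_of_pos (by linarith)).ne'
    have hπ : √π ≠ 0 := (sqrt_pos.2 pi_pos).ne'
    rw [MeasureTheory.integral_mul_const, integral_sin_mul_rpow hδ0 hδ1]
    nth_rw 1 [← sq_sqrt pi_pos.le]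
    field_simp
  rw [hconst] at hlim
  refine hlim.congr' ?_
  filter_upwards [self_mem_nhdsWithin] with z hz
  exact (rpow_mul_dagumSpectralDensity lam δ hz).symm

end dagum

theorem dagum_low_frequency_dim_one_general (δ lam : ℝ) (hδ0 : 0 < δ) (hδ1 : δ < 1)
    (hlam : 0 < lam) :
    ∃ Dh : ℝ → ℝ,
      (∀ z : ℝ, 0 < z →
        Tendsto (fun T : ℝ ↦ 1 / π * ∫ t in (0 : ℝ)..T, cos (z * t) * dagum lam δ t)
          atTop (𝓝 (Dh z))) ∧
      Tendsto (fun z : ℝ ↦ z ^ (1 - δ) * Dh z) (𝓝[>] 0)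
        (𝓝 (2 ^ (-δ) * lam * Gamma ((1 - δ) / 2) / (√π * Gamma (δ / 2)))) :=
  ⟨dagumSpectralDensity lam δ,
    fun _ hz ↦ tendsto_integral_cos_mul_dagum hδ0 hlam.le hz.ne',
    tendsto_rpow_mul_dagumSpectralDensity hδ0 hδ1 (by linarith)⟩

end

/-- Low-frequency behaviour in dimension `d = 1` for `δ ∈ (0,1)`, `δλ ∈ (0,2]`:
the improper integral `\widehat D(z) = (1/π) lim_{T→∞} ∫₀^T cos(zt) D_{λ,δ}(t) dt`
exists for every `z > 0`, and `z^{1-δ} \widehat D(z) → 2^{-δ} λ Γ((1-δ)/2)/(√π Γ(δ/2))`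
as `z → 0⁺`. -/
theorem dagum_low_frequency_dim_one (δ lam : ℝ) (hδ0 : 0 < δ) (hδ1 : δ < 1)
    (hlam : 0 < lam) (hdl0 : 0 < δ * lam) (hdl2 : δ * lam ≤ 2) :
    ∃ Dh : ℝ → ℝ,
      (∀ z : ℝ, 0 < z →
        Tendsto (fun T : ℝ => (1 / Real.pi) * ∫ t in (0 : ℝ)..T, Real.cos (z * t) * dagum lam δ t)
          atTop (nhds (Dh z))) ∧
      Tendsto (fun z : ℝ => z ^ (1 - δ) * Dh z) (nhdsWithin 0 (Ioi 0))
        (nhds (2 ^ (-δ) * lam * Real.Gamma ((1 - δ) / 2) /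
          (Real.sqrt Real.pi * Real.Gamma (δ / 2)))) :=
  dagum_low_frequency_dim_one_general δ lam hδ0 hδ1 hlam
end

section
/- Let d = 1, δ ∈ (1,2), λ > 0. Then t ↦ D_{λ,δ}(t) is (absolutely) integrable on (0,∞), the spectral density \widehat{D}(z) = (1/π)∫₀^∞ cos(z t) D_{λ,δ}(t) dt is continuous at z = 0 (as a limit from the right), and lim_{z→0⁺} \widehat{D}(z) = (1/π) ∫₀^∞ D_{λ,δ}(t) dt = Γ(1 − 1/δ) Γ(1/δ + λ) / ( π Γ(λ) ). -/
open MeasureTheory Set Filter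

/-!
If `U` has the beta distribution with parameters `λ` and `1`, so that `P(U ≤ a) = a ^ λ` on
`[0, 1]`, then `D_{λ,δ}` is the tail `t ↦ P(X > t)` of `X = (U / (1 - U)) ^ (1 / δ)`. By the layer
cake formula `∫₀^∞ D_{λ,δ}` is the expectation of `X`, a fractional moment of the odds
`U / (1 - U)`. Such moments are quotients of beta functions, because multiplying a beta density by
a power of the odds gives a multiple of another beta density. Continuity of the spectral density
is then dominated convergence.
-/

section CosineTransform

variable {E : Type*} [NormedAddCommGroup E] [NormedSpace ℝ E]

lemma continuous_integral_cos_mul_smul {μ : Measure ℝ} {f : ℝ → E} (hf : Integrable f μ) :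
    Continuous fun z : ℝ => ∫ t, Real.cos (z * t) • f t ∂μ := by
  refine continuous_of_dominated (bound := fun t => ‖f t‖) (fun z => ?_) (fun z => ?_) hf.norm ?_
  · exact (by fun_prop : Continuous fun t : ℝ => Real.cos (z * t)).aestronglyMeasurable.smul
      hf.aestronglyMeasurable
  · refine .of_forall fun t => ?_
    rw [norm_smul]
    exact mul_le_of_le_one_left (norm_nonneg _) (Real.abs_cos_le_one _)
  · exact .of_forall fun t => by fun_prop

end CosineTransform

section BetaMoments

open ProbabilityTheory

variable {α β s : ℝ}

lemma measurable_betaPDF (α β : ℝ) : Measurable (betaPDF α β) :=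
  (measurable_betaPDFReal α β).ennreal_ofReal

lemma ae_mem_Ioo_betaMeasure (α β : ℝ) : ∀ᵐ x ∂betaMeasure α β, x ∈ Ioo 0 1 := by
  rw [betaMeasure, ae_withDensity_iff (measurable_betaPDF α β)]
  refine .of_forall fun x hx => ⟨?_, ?_⟩
  · exact lt_of_not_ge fun h => hx (betaPDF_eq_zero_of_nonpos h)
  · exact lt_of_not_ge fun h => hx (betaPDF_eq_zero_of_one_le h)

lemma betaPDF_mul_odds_rpow (hα : 0 < α) (hβ : 0 < β) (hαs : 0 < α + s) (hβs : 0 < β - s) (x : ℝ) :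
    betaPDF α β x * ENNReal.ofReal ((x / (1 - x)) ^ s) =
      ENNReal.ofReal (beta (α + s) (β - s) / beta α β) * betaPDF (α + s) (β - s) x := by
  rcases le_or_gt x 0 with hx0 | hx0
  · simp only [betaPDF_eq_zero_of_nonpos hx0, zero_mul, mul_zero]
  rcases le_or_gt 1 x with hx1 | hx1
  · simp only [betaPDF_eq_zero_of_one_le hx1, zero_mul, mul_zero]
  have hx1' : 0 < 1 - x := sub_pos.2 hx1
  have hB := beta_pos hα hβ
  have hBs := beta_pos hαs hβs
  rw [betaPDF_of_pos_lt_one hx0 hx1, betaPDF_of_pos_lt_one hx0 hx1,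
    ← ENNReal.ofReal_mul (by positivity), ← ENNReal.ofReal_mul (by positivity),
    Real.div_rpow hx0.le hx1'.le, add_sub_right_comm, Real.rpow_add hx0, sub_right_comm,
    Real.rpow_sub hx1' (β - 1)]
  congr 1
  field_simp

lemma lintegral_odds_rpow_betaMeasure (hα : 0 < α) (hβ : 0 < β) (hαs : 0 < α + s)
    (hβs : 0 < β - s) :
    ∫⁻ x, ENNReal.ofReal ((x / (1 - x)) ^ s) ∂betaMeasure α β =
      ENNReal.ofReal (beta (α + s) (β - s) / beta α β) := by
  rw [betaMeasure, lintegral_withDensity_eq_lintegral_mul _ (measurable_betaPDF α β) (by fun_prop)]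
  simp only [Pi.mul_apply, betaPDF_mul_odds_rpow hα hβ hαs hβs]
  rw [lintegral_const_mul _ (measurable_betaPDF _ _), lintegral_betaPDF_eq_one hαs hβs, mul_one]

lemma beta_one_right (hα : 0 < α) : beta α 1 = 1 / α := by
  have hΓ := (Real.Gamma_pos_of_pos hα).ne'
  rw [beta, Real.Gamma_one, Real.Gamma_add_one hα.ne']
  field_simp

lemma beta_add_sub_div_beta (hαβ : 0 < α + β) :
    beta (α + s) (β - s) / beta α β =
      Real.Gamma (α + s) * Real.Gamma (β - s) / (Real.Gamma α * Real.Gamma β) := by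
  rw [beta, beta, add_add_sub_cancel,
    div_div_div_cancel_right₀ (Real.Gamma_pos_of_pos hαβ).ne']

lemma betaMeasure_one_right_Ioi (hα : 0 < α) {a : ℝ} (ha0 : 0 ≤ a) (ha1 : a ≤ 1) :
    betaMeasure α 1 (Ioi a) = ENNReal.ofReal (1 - a ^ α) := by
  have hint : IntegrableOn (fun x : ℝ => α * x ^ (α - 1)) (Ioo a 1) := by
    rw [← intervalIntegrable_iff_integrableOn_Ioo_of_le ha1]
    exact (intervalIntegral.intervalIntegrable_rpow' (by linarith)).const_mul α
  have hnonneg : ∀ x ∈ Ioo a 1, 0 ≤ α * x ^ (α - 1) := fun x hx =>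
    mul_nonneg hα.le (Real.rpow_nonneg (ha0.trans hx.1.le) _)
  have hpdf : ∀ x ∈ Ioo a 1, betaPDF α 1 x = ENNReal.ofReal (α * x ^ (α - 1)) := fun x hx => by
    rw [betaPDF_of_pos_lt_one (ha0.trans_lt hx.1) hx.2, beta_one_right hα, one_div_one_div,
      sub_self, Real.rpow_zero, mul_one]
  calc betaMeasure α 1 (Ioi a) = betaMeasure α 1 (Ioo a 1) := by
        refine measure_congr ?_
        filter_upwards [ae_mem_Ioo_betaMeasure α 1] with x hx
        exact propext ⟨fun h => ⟨h, hx.2⟩, And.left⟩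
    _ = ∫⁻ x in Ioo a 1, ENNReal.ofReal (α * x ^ (α - 1)) := by
        rw [betaMeasure, withDensity_apply _ measurableSet_Ioo,
          setLIntegral_congr_fun measurableSet_Ioo hpdf]
    _ = ENNReal.ofReal (∫ x in a..1, α * x ^ (α - 1)) := by
        rw [intervalIntegral.integral_of_le ha1, integral_Ioc_eq_integral_Ioo,
          ofReal_integral_eq_lintegral_ofReal hint
            (ae_restrict_of_forall_mem measurableSet_Ioo hnonneg)]
    _ = ENNReal.ofReal (1 - a ^ α) := by
        rw [intervalIntegral.integral_const_mul, integral_rpow (Or.inl (by linarith)),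
          sub_add_cancel, Real.one_rpow, mul_div_cancel₀ _ hα.ne']

end BetaMoments

section Dagum

open ProbabilityTheory

variable {δ lam t : ℝ}

lemma lt_odds_rpow_inv_iff (hδ : 0 < δ) (ht : 0 ≤ t) {x : ℝ} (hx : x ∈ Ioo 0 1) :
    t < (x / (1 - x)) ^ δ⁻¹ ↔ t ^ δ / (1 + t ^ δ) < x := by
  have hx1 : 0 < 1 - x := sub_pos.2 hx.2
  rw [Real.lt_rpow_inv_iff_of_pos ht (div_pos hx.1 hx1).le hδ, lt_div_iff₀ hx1,
    div_lt_iff₀ (by positivity)]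
  constructor <;> intro h <;> linarith

lemma rpow_div_one_add_rpow_mem_Icc (δ : ℝ) (ht : 0 ≤ t) : t ^ δ / (1 + t ^ δ) ∈ Icc 0 1 :=
  ⟨by positivity, div_le_one_of_le₀ (le_add_of_nonneg_left zero_le_one) (by positivity)⟩

lemma dagum_nonneg (δ : ℝ) (hlam : 0 ≤ lam) (ht : 0 ≤ t) : 0 ≤ dagum lam δ t :=
  have h := rpow_div_one_add_rpow_mem_Icc δ ht
  sub_nonneg.2 (Real.rpow_le_one h.1 h.2 hlam)

lemma measurable_dagum (lam δ : ℝ) : Measurable (dagum lam δ) := by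
  unfold dagum
  fun_prop

lemma betaMeasure_lt_odds_rpow_inv (hδ : 0 < δ) (hlam : 0 < lam) (ht : 0 ≤ t) :
    betaMeasure lam 1 {x | t < (x / (1 - x)) ^ δ⁻¹} = ENNReal.ofReal (dagum lam δ t) := by
  have hmem := rpow_div_one_add_rpow_mem_Icc δ ht
  rw [dagum, ← betaMeasure_one_right_Ioi hlam hmem.1 hmem.2]
  refine measure_congr ?_
  filter_upwards [ae_mem_Ioo_betaMeasure lam 1] with x hx
  exact propext (lt_odds_rpow_inv_iff hδ ht hx)

lemma lintegral_dagum (hδ : 1 < δ) (hlam : 0 < lam) :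
    ∫⁻ t in Ioi 0, ENNReal.ofReal (dagum lam δ t) =
      ENNReal.ofReal (Real.Gamma (1 - 1 / δ) * Real.Gamma (1 / δ + lam) / Real.Gamma lam) := by
  have hδ0 : 0 < δ := zero_lt_one.trans hδ
  have hodds : 0 ≤ᵐ[betaMeasure lam 1] fun x => (x / (1 - x)) ^ δ⁻¹ := by
    filter_upwards [ae_mem_Ioo_betaMeasure lam 1] with x hx
    exact Real.rpow_nonneg (div_nonneg hx.1.le (sub_nonneg.2 hx.2.le)) _
  calc ∫⁻ t in Ioi 0, ENNReal.ofReal (dagum lam δ t)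
      = ∫⁻ t in Ioi 0, betaMeasure lam 1 {x | t < (x / (1 - x)) ^ δ⁻¹} :=
        setLIntegral_congr_fun measurableSet_Ioi fun t ht =>
          (betaMeasure_lt_odds_rpow_inv hδ0 hlam (le_of_lt ht)).symm
    _ = ∫⁻ x, ENNReal.ofReal ((x / (1 - x)) ^ δ⁻¹) ∂betaMeasure lam 1 :=
        (lintegral_eq_lintegral_meas_lt _ hodds (Measurable.aemeasurable (by fun_prop))).symm
    _ = ENNReal.ofReal (beta (lam + δ⁻¹) (1 - δ⁻¹) / beta lam 1) :=
        lintegral_odds_rpow_betaMeasure hlam one_pos (by positivity)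
          (sub_pos.2 (inv_lt_one_of_one_lt₀ hδ))
    _ = ENNReal.ofReal (Real.Gamma (1 - 1 / δ) * Real.Gamma (1 / δ + lam) / Real.Gamma lam) := by
        rw [beta_add_sub_div_beta (by positivity), Real.Gamma_one, mul_one, one_div,
          mul_comm, add_comm lam]

lemma dagum_nonneg_ae (δ : ℝ) (hlam : 0 ≤ lam) :
    0 ≤ᵐ[volume.restrict (Ioi 0)] dagum lam δ :=
  ae_restrict_of_forall_mem measurableSet_Ioi fun _ ht => dagum_nonneg δ hlam (le_of_lt ht)

lemma integrableOn_dagum (hδ : 1 < δ) (hlam : 0 < lam) : IntegrableOn (dagum lam δ) (Ioi 0) := by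
  refine ⟨(measurable_dagum lam δ).aestronglyMeasurable, ?_⟩
  rw [hasFiniteIntegral_iff_ofReal (dagum_nonneg_ae δ hlam.le), lintegral_dagum hδ hlam]
  exact ENNReal.ofReal_lt_top

lemma integral_dagum (hδ : 1 < δ) (hlam : 0 < lam) :
    ∫ t in Ioi 0, dagum lam δ t =
      Real.Gamma (1 - 1 / δ) * Real.Gamma (1 / δ + lam) / Real.Gamma lam := by
  have hsub : 0 < 1 - 1 / δ := sub_pos.2 ((div_lt_one (zero_lt_one.trans hδ)).2 hδ)
  rw [integral_eq_lintegral_of_nonneg_ae (dagum_nonneg_ae δ hlam.le)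
      (measurable_dagum lam δ).aestronglyMeasurable,
    lintegral_dagum hδ hlam, ENNReal.toReal_ofReal]
  positivity

end Dagum

theorem dagum_spectral_density_continuous_at_zero_general (δ lam : ℝ) (hδ : 1 < δ)
    (hlam : 0 < lam) :
    IntegrableOn (fun t : ℝ => dagum lam δ t) (Ioi 0) ∧
    Tendsto (fun z : ℝ => (1 / Real.pi) * ∫ t in Ioi (0 : ℝ), Real.cos (z * t) * dagum lam δ t)
      (nhds 0) (nhds ((1 / Real.pi) * ∫ t in Ioi (0 : ℝ), dagum lam δ t)) ∧
    (1 / Real.pi) * ∫ t in Ioi (0 : ℝ), dagum lam δ t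
      = Real.Gamma (1 - 1 / δ) * Real.Gamma (1 / δ + lam) / (Real.pi * Real.Gamma lam) := by
  have hint := integrableOn_dagum hδ hlam
  refine ⟨hint, ?_, ?_⟩
  · have hcont := (continuous_integral_cos_mul_smul hint).const_mul (1 / Real.pi)
    simpa only [smul_eq_mul, zero_mul, Real.cos_zero, one_mul] using hcont.tendsto 0
  · rw [integral_dagum hδ hlam, div_mul_div_comm, one_mul]

/-- For `d = 1`, `δ ∈ (1,2)` and `λ > 0`: the Dagum function is integrable on `(0,∞)`,
its spectral density `\widehat D(z) = (1/π)∫₀^∞ cos(zt) D_{λ,δ}(t) dt` is continuous at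
`z = 0` from the right, and
`lim_{z→0⁺} \widehat D(z) = (1/π)∫₀^∞ D_{λ,δ}(t) dt = Γ(1-1/δ)Γ(1/δ+λ)/(π Γ(λ))`. -/
theorem dagum_spectral_density_continuous_at_zero (δ lam : ℝ) (hδ1 : 1 < δ) (hδ2 : δ < 2)
    (hlam : 0 < lam) :
    IntegrableOn (fun t : ℝ => dagum lam δ t) (Ioi 0) ∧
    Tendsto (fun z : ℝ => (1 / Real.pi) * ∫ t in Ioi (0 : ℝ), Real.cos (z * t) * dagum lam δ t)
      (nhdsWithin 0 (Ioi 0))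
      (nhds ((1 / Real.pi) * ∫ t in Ioi (0 : ℝ), dagum lam δ t)) ∧
    (1 / Real.pi) * ∫ t in Ioi (0 : ℝ), dagum lam δ t
      = Real.Gamma (1 - 1 / δ) * Real.Gamma (1 / δ + lam) / (Real.pi * Real.Gamma lam) := by
  have ⟨hint, hlim, hval⟩ := dagum_spectral_density_continuous_at_zero_general δ lam hδ1 hlam
  exact ⟨hint, hlim.mono_left nhdsWithin_le_nhds, hval⟩
end
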